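/- arXiv:1607.08496 — 4 statements merged into one kernel-verified Lean document; each statement's English description precedes it below -/
import Mathlib

section
/- For every connected finite simple graph G on n ≥ 3 vertices, the connected set polynomial C(G;x) has a nonreal complex root; that is, there exists z ∈ ℂ with z ∉ ℝ such that Σ_{k=1}^n c_k z^k = 0. -/
open scoped Classical

/-- The number of connected sets (nonempty vertex subsets inducing a connected
subgraph) of order `k` in the finite simple graph `G`. -/
noncomputable def connCount {V : Type*} [Fintype V] (G : SimpleGraph V) (k : ℕ) : ℕ :=
  (Finset.univ.filter fun S : Finset V =>
    S.card = k ∧ (G.induce (S : Set V)).Connected).card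

/-- The connected set polynomial `C(G;x) = ∑_{k=1}^n c_k x^k`, at a complex argument. -/
noncomputable def connPoly {V : Type*} [Fintype V] (G : SimpleGraph V) (x : ℂ) : ℂ :=
  ∑ k ∈ Finset.Icc 1 (Fintype.card V), (connCount G k : ℂ) * x ^ k

/-!
If every root of `C(G;x) / x` is real, then that polynomial splits over `ℝ`; having nonnegative
coefficients, it has only nonpositive roots. With `n` the number of vertices, it is monic of degree
`n - 1`, so the negated roots are `n - 1` nonnegative reals with sum `c_{n-1} ≤ n` and product
`c_1 = n`. But `r ≤ exp (r - 1)` for each of them, so the product is at most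
`exp (n - (n - 1)) = e < 3`, a contradiction for `n ≥ 3`.
-/

section

open Polynomial

lemma multiset_prod_le_exp_sum_sub_card {s : Multiset ℝ} (hs : ∀ r ∈ s, 0 ≤ r) :
    s.prod ≤ Real.exp (s.sum - s.card) := by
  calc s.prod = (s.map id).prod := by rw [Multiset.map_id]
    _ ≤ (s.map fun r => Real.exp (r - 1)).prod :=
      Multiset.prod_map_le_prod_map₀ _ _ hs fun r _ => by
        simpa using Real.add_one_le_exp (r - 1)
    _ = Real.exp (s.map fun r => r - 1).sum := by
      rw [Real.exp_multiset_sum, Multiset.map_map, Function.comp_def]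
    _ = Real.exp (s.sum - s.card) := by simp [Multiset.sum_map_sub]

lemma nonpos_of_mem_roots_of_coeff_nonneg {R : Type*} [CommRing R] [LinearOrder R]
    [IsStrictOrderedRing R] {p : R[X]} (hp : ∀ k, 0 ≤ p.coeff k) {r : R} (hr : r ∈ p.roots) :
    r ≤ 0 := by
  obtain ⟨hp0, hroot⟩ := mem_roots'.1 hr
  by_contra! hpos
  have heval : 0 < p.eval r := by
    rw [eval_eq_sum]
    refine Finset.sum_pos' (fun k _ => mul_nonneg (hp k) (pow_nonneg hpos.le k))
      ⟨p.natDegree, natDegree_mem_support_of_nonzero hp0, ?_⟩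
    have hlead : 0 < p.leadingCoeff := (hp _).lt_of_ne' (leadingCoeff_ne_zero.2 hp0)
    exact mul_pos hlead (pow_pos hpos _)
  exact heval.ne' hroot

lemma coeff_zero_le_exp_nextCoeff_sub_natDegree {p : ℝ[X]} (hsplits : p.Splits)
    (hmonic : p.Monic) (hp : ∀ k, 0 ≤ p.coeff k) :
    p.coeff 0 ≤ Real.exp (p.nextCoeff - p.natDegree) := by
  have hnonneg : ∀ r ∈ p.roots.map Neg.neg, 0 ≤ r := by
    intro r hr
    obtain ⟨x, hx, rfl⟩ := Multiset.mem_map.1 hr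
    exact neg_nonneg.2 (nonpos_of_mem_roots_of_coeff_nonneg hp hx)
  have hprod : (p.roots.map Neg.neg).prod = p.coeff 0 := by
    rw [Multiset.prod_map_neg, hsplits.coeff_zero_eq_prod_roots_of_monic hmonic,
      hsplits.natDegree_eq_card_roots]
  have hsum : (p.roots.map Neg.neg).sum = p.nextCoeff := by
    rw [Multiset.sum_map_neg', hsplits.nextCoeff_eq_neg_sum_roots_of_monic hmonic]
  have hcard : (p.roots.map Neg.neg).card = p.natDegree := by
    rw [Multiset.card_map, hsplits.natDegree_eq_card_roots]
  simpa only [hprod, hsum, hcard] using multiset_prod_le_exp_sum_sub_card hnonneg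

lemma exists_nonreal_aeval_eq_zero_of_not_splits {p : ℝ[X]} (hp : ¬ p.Splits) :
    ∃ z : ℂ, z.im ≠ 0 ∧ aeval z p = 0 := by
  by_contra! hreal
  refine hp (Splits.of_splits_map (algebraMap ℝ ℂ) (IsAlgClosed.splits _) fun z hz => ?_)
  have hroot : aeval z p = 0 := by
    simpa [aeval_def, eval_map] using (isRoot_of_mem_roots hz).eq_zero
  have him : z.im = 0 := by_contra fun h => hreal z h hroot
  exact ⟨z.re, Complex.ext rfl him.symm⟩

variable {V : Type*} [Fintype V] {G : SimpleGraph V}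

lemma connCount_card (hG : G.Connected) : connCount G (Fintype.card V) = 1 := by
  rw [connCount, Finset.card_eq_one]
  refine ⟨Finset.univ, Finset.ext fun S => ?_⟩
  simp only [Finset.mem_filter_univ, Finset.mem_singleton, Finset.card_eq_iff_eq_univ,
    and_iff_left_iff_imp]
  rintro rfl
  rw [Finset.coe_univ]
  exact (SimpleGraph.induceUnivIso G).connected_iff.2 hG

variable (G)

lemma connCount_le_choose (k : ℕ) : connCount G k ≤ (Fintype.card V).choose k := by
  rw [connCount, ← Finset.card_univ, ← Finset.card_powersetCard]
  refine Finset.card_le_card fun S hS => ?_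
  exact Finset.mem_powersetCard.2 ⟨Finset.subset_univ S, (Finset.mem_filter.1 hS).2.1⟩

lemma connCount_one : connCount G 1 = Fintype.card V := by
  have hsingletons : (Finset.univ.filter fun S : Finset V =>
      S.card = 1 ∧ (G.induce (S : Set V)).Connected) = Finset.powersetCard 1 Finset.univ := by
    ext S
    simp only [Finset.mem_filter_univ, Finset.mem_powersetCard_univ, and_iff_left_iff_imp]
    intro hS
    obtain ⟨v, rfl⟩ := Finset.card_eq_one.1 hS
    rw [Finset.coe_singleton]
    exact .of_subsingleton
  rw [connCount, hsingletons, Finset.card_powersetCard, Nat.choose_one_right, Finset.card_univ]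

/-- The quotient `C(G;x) / x = ∑_{k=0}^{n-1} c_{k+1} x^k` of the connected set polynomial, as a
polynomial with real coefficients. Dividing by `x` makes the constant coefficient `c_1 = n`. -/
noncomputable def connPolyDivX : ℝ[X] :=
  ∑ k ∈ Finset.range (Fintype.card V), monomial k (connCount G (k + 1) : ℝ)

lemma connPoly_eq_mul_aeval_connPolyDivX (z : ℂ) :
    connPoly G z = z * aeval z (connPolyDivX G) := by
  have haeval : aeval z (connPolyDivX G) =
      ∑ k ∈ Finset.range (Fintype.card V), (connCount G (k + 1) : ℂ) * z ^ k := by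
    simp [connPolyDivX, aeval_monomial]
  rw [haeval, Finset.mul_sum, connPoly, ← Finset.Ico_add_one_right_eq_Icc,
    Finset.sum_Ico_eq_sum_range, Nat.add_sub_cancel]
  refine Finset.sum_congr rfl fun k _ => ?_
  rw [add_comm 1 k, pow_succ', mul_left_comm]

lemma coeff_connPolyDivX (k : ℕ) : (connPolyDivX G).coeff k = connCount G (k + 1) := by
  simp only [connPolyDivX, finsetSum_coeff, coeff_monomial, Finset.sum_ite_eq', Finset.mem_range,
    ite_eq_left_iff, not_lt]
  intro hk
  have hzero : connCount G (k + 1) = 0 :=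
    Nat.eq_zero_of_le_zero <|
      (connCount_le_choose G (k + 1)).trans_eq (Nat.choose_eq_zero_of_lt (by lia))
  rw [hzero, Nat.cast_zero]

variable {G}

lemma coeff_connPolyDivX_card_sub_one (hG : G.Connected) :
    (connPolyDivX G).coeff (Fintype.card V - 1) = 1 := by
  have := hG.nonempty
  rw [coeff_connPolyDivX, Nat.sub_add_cancel Fintype.card_pos, connCount_card hG, Nat.cast_one]

lemma natDegree_connPolyDivX (hG : G.Connected) :
    (connPolyDivX G).natDegree = Fintype.card V - 1 := by
  refine natDegree_eq_of_le_of_coeff_ne_zero ?_ ?_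
  · refine natDegree_sum_le_of_forall_le _ _ fun k hk => (natDegree_monomial_le _).trans ?_
    exact Nat.le_sub_one_of_lt (Finset.mem_range.1 hk)
  · rw [coeff_connPolyDivX_card_sub_one hG]
    exact one_ne_zero

lemma monic_connPolyDivX (hG : G.Connected) : (connPolyDivX G).Monic := by
  rw [Monic, leadingCoeff, natDegree_connPolyDivX hG, coeff_connPolyDivX_card_sub_one hG]

lemma nextCoeff_connPolyDivX_le (hG : G.Connected) :
    (connPolyDivX G).nextCoeff ≤ Fintype.card V := by
  rw [nextCoeff, natDegree_connPolyDivX hG]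
  split_ifs with h
  · exact Nat.cast_nonneg _
  · obtain ⟨d, hd⟩ : ∃ d, Fintype.card V = d + 2 := ⟨Fintype.card V - 2, by lia⟩
    have hle : connCount G (d + 1) ≤ d + 2 := by
      simpa [hd] using connCount_le_choose G (d + 1)
    rw [coeff_connPolyDivX, hd]
    exact_mod_cast hle

lemma not_splits_connPolyDivX (hG : G.Connected) (hn : 3 ≤ Fintype.card V) :
    ¬ (connPolyDivX G).Splits := by
  intro hsplits
  have hcoeff_nonneg (k : ℕ) : 0 ≤ (connPolyDivX G).coeff k := by
    rw [coeff_connPolyDivX]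
    exact Nat.cast_nonneg _
  have hexponent : (connPolyDivX G).nextCoeff - (connPolyDivX G).natDegree ≤ 1 := by
    rw [natDegree_connPolyDivX hG, Nat.cast_pred (by lia)]
    linarith [nextCoeff_connPolyDivX_le hG]
  have hlt : (Fintype.card V : ℝ) < 3 := calc
    (Fintype.card V : ℝ) = (connPolyDivX G).coeff 0 := by
      rw [coeff_connPolyDivX, zero_add, connCount_one]
    _ ≤ Real.exp ((connPolyDivX G).nextCoeff - (connPolyDivX G).natDegree) :=
      coeff_zero_le_exp_nextCoeff_sub_natDegree hsplits (monic_connPolyDivX hG) hcoeff_nonneg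
    _ ≤ Real.exp 1 := Real.exp_le_exp.2 hexponent
    _ < 3 := Real.exp_one_lt_three
  exact hn.not_gt (by exact_mod_cast hlt)

end

/-- For every connected finite simple graph on at least 3 vertices, the connected set
polynomial has a nonreal complex root. -/
theorem connPoly_has_nonreal_root {V : Type*} [Fintype V] (G : SimpleGraph V)
    (hG : G.Connected) (hn : 3 ≤ Fintype.card V) :
    ∃ z : ℂ, z.im ≠ 0 ∧ connPoly G z = 0 := by
  obtain ⟨z, him, hroot⟩ :=
    exists_nonreal_aeval_eq_zero_of_not_splits (not_splits_connPolyDivX hG hn)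
  exact ⟨z, him, by rw [connPoly_eq_mul_aeval_connPolyDivX, hroot, mul_zero]⟩
end

section
/- For every integer n ≥ 2, the node reliability polynomial of the cycle graph C_{2n+1} on 2n+1 vertices has a real root in the open interval (2n² − 1, 2n²). In particular, the collection of real roots of node reliability polynomials over all graphs is unbounded. -/
open scoped Classical

/-- The node reliability polynomial of `G` at a real argument `p`: the sum over all
connected sets `S` of `p^|S| * (1-p)^(N-|S|)`. -/
noncomputable def nodeRelR {V : Type*} [Fintype V] (G : SimpleGraph V) (p : ℝ) : ℝ :=
  ∑ S ∈ Finset.univ.filter fun S : Finset V => (G.induce (S : Set V)).Connected,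
    p ^ S.card * (1 - p) ^ (Fintype.card V - S.card)

/-!
The connected sets of a cycle on `N = n + 1` vertices are the whole vertex set and the `N` arcs of
each length `1, …, n`. Summing the resulting geometric series gives
`(2p - 1) NRel(C_N; p) = p (pⁿ (2p - 1) - N (p - 1) (pⁿ - (1 - p)ⁿ))`. For `N = 2n + 1` and
`p > 1/2`, the sign of `NRel` is therefore that of
`(2p - 1) - (2n + 1) (p - 1) (1 - (1 - p⁻¹) ^ (2n))`. Truncating the
binomial expansion of the power after an odd (even) number of terms bounds it from above (below):
three terms show that the sign is negative at `2n² - 1`, four that it is positive at `2n²`, and a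
root lies in between.
-/

section NodeReliability

variable {V : Type*} [Fintype V] (G : SimpleGraph V)

theorem nodeRelR_eq_sum {s : Finset (Finset V)}
    (hs : ∀ S : Finset V, S ∈ s ↔ (G.induce (S : Set V)).Connected) (p : ℝ) :
    nodeRelR G p = ∑ S ∈ s, p ^ S.card * (1 - p) ^ (Fintype.card V - S.card) := by
  refine Finset.sum_congr (Finset.ext fun S => ?_) fun _ _ => rfl
  simp only [Finset.mem_filter, Finset.mem_univ, true_and, hs]

theorem continuous_nodeRelR : Continuous (nodeRelR G) := by
  unfold nodeRelR
  fun_prop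

end NodeReliability

theorem exists_adj_of_induce_preconnected {V : Type*} {G : SimpleGraph V} {S T : Set V}
    (hS : (G.induce S).Preconnected) (hT : T.Nonempty) (hTS : T ⊂ S) :
    ∃ u ∈ T, ∃ v ∈ S, v ∉ T ∧ G.Adj u v := by
  obtain ⟨u, hu⟩ := hT
  obtain ⟨v, hvS, hvT⟩ := Set.exists_of_ssubset hTS
  obtain ⟨w⟩ := hS ⟨u, hTS.subset hu⟩ ⟨v, hvS⟩
  obtain ⟨d, -, hfst, hsnd⟩ := w.exists_boundary_dart (Subtype.val ⁻¹' T) hu hvT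
  exact ⟨d.fst, hfst, d.snd, d.snd.2, hsnd, d.adj⟩

section Arcs

open scoped Fin.NatCast Fin.CommRing

variable {n : ℕ}

theorem cycleGraph_adj_iff {u v : Fin (n + 1)} :
    (SimpleGraph.cycleGraph (n + 1)).Adj u v ↔ u ≠ v ∧ (u = v + 1 ∨ v = u + 1) := by
  rw [SimpleGraph.cycleGraph_eq_circulantGraph, SimpleGraph.circulantGraph_adj,
    Set.mem_singleton_iff, Set.mem_singleton_iff, sub_eq_iff_eq_add', sub_eq_iff_eq_add',
    add_comm v, add_comm u]

/-- The arc `a, a + 1, …, a + (k - 1)` of `k` consecutive vertices of the cycle on `Fin (n + 1)`,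
with indices taken modulo `n + 1`, so that it is the whole cycle as soon as `k > n`. -/
def cycleArc (a : Fin (n + 1)) (k : ℕ) : Finset (Fin (n + 1)) :=
  (Finset.range k).image fun i : ℕ => a + i

theorem mem_cycleArc {a x : Fin (n + 1)} {k : ℕ} :
    x ∈ cycleArc a k ↔ ∃ i < k, a + (i : Fin (n + 1)) = x := by
  simp only [cycleArc, Finset.mem_image, Finset.mem_range]

theorem left_mem_cycleArc (a : Fin (n + 1)) {k : ℕ} (hk : 0 < k) : a ∈ cycleArc a k :=
  mem_cycleArc.mpr ⟨0, hk, by simp⟩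

theorem cycleArc_one (a : Fin (n + 1)) : cycleArc a 1 = {a} := by
  simp [cycleArc]

theorem cycleArc_succ (a : Fin (n + 1)) (k : ℕ) :
    cycleArc a (k + 1) = insert (a + (k : Fin (n + 1))) (cycleArc a k) := by
  rw [cycleArc, Finset.range_add_one, Finset.image_insert, cycleArc]

theorem cycleArc_succ' (a : Fin (n + 1)) (k : ℕ) :
    cycleArc a (k + 1) = insert a (cycleArc (a + 1) k) := by
  ext x
  simp only [Finset.mem_insert, mem_cycleArc, Nat.exists_lt_succ_left, Nat.cast_zero, add_zero,
    Nat.cast_succ, add_assoc, add_comm (1 : Fin (n + 1)), eq_comm (a := x)]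

theorem card_cycleArc_le (a : Fin (n + 1)) (k : ℕ) : (cycleArc a k).card ≤ k :=
  Finset.card_image_le.trans_eq (Finset.card_range k)

theorem card_cycleArc (a : Fin (n + 1)) {k : ℕ} (hk : k ≤ n + 1) : (cycleArc a k).card = k := by
  rw [cycleArc, Finset.card_image_of_injOn, Finset.card_range]
  intro i hi j hj hij
  have hlt : ∀ l ∈ Finset.range k, l < n + 1 := fun l hl => (Finset.mem_range.mp hl).trans_le hk
  exact CharP.natCast_injOn_Iio (Fin (n + 1)) (n + 1) (hlt i hi) (hlt j hj) (add_left_cancel hij)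

theorem sub_one_notMem_cycleArc (a : Fin (n + 1)) {k : ℕ} (hk : k ≤ n) :
    a - 1 ∉ cycleArc a k := by
  rw [mem_cycleArc]
  rintro ⟨i, hik, hi⟩
  have hzero : ((i + 1 : ℕ) : Fin (n + 1)) = 0 := by
    push_cast
    linear_combination hi
  have hdvd : n + 1 ∣ i + 1 := (CharP.cast_eq_zero_iff (Fin (n + 1)) (n + 1) _).mp hzero
  have := Nat.le_of_dvd i.succ_pos hdvd
  omega

theorem eq_left_of_mem_cycleArc {a x : Fin (n + 1)} {k : ℕ} (hx : x ∈ cycleArc a k)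
    (hx' : x - 1 ∉ cycleArc a k) : x = a := by
  obtain ⟨i, hik, rfl⟩ := mem_cycleArc.mp hx
  cases i with
  | zero => simp
  | succ i =>
    refine absurd (mem_cycleArc.mpr ⟨i, by omega, ?_⟩) hx'
    push_cast
    ring

theorem cycleArc_left_injective {k : ℕ} (hk : 0 < k) (hkn : k ≤ n) :
    Function.Injective fun a : Fin (n + 1) => cycleArc a k := by
  intro a b (hab : cycleArc a k = cycleArc b k)
  exact eq_left_of_mem_cycleArc (hab ▸ left_mem_cycleArc a hk)
    (hab ▸ sub_one_notMem_cycleArc a hkn)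

theorem cycleArc_injOn :
    Set.InjOn (fun q : Fin (n + 1) × ℕ => cycleArc q.1 (q.2 + 1)) {q | q.2 < n} := by
  rintro ⟨a, i⟩ (hi : i < n) ⟨b, j⟩ (hj : j < n) (h : cycleArc a (i + 1) = cycleArc b (j + 1))
  have hcard := congrArg Finset.card h
  rw [card_cycleArc a (by omega), card_cycleArc b (by omega)] at hcard
  obtain rfl : i = j := by omega
  rw [cycleArc_left_injective i.succ_pos hi h]

theorem induce_cycleArc_connected (a : Fin (n + 1)) {k : ℕ} (hk : 0 < k) :
    ((SimpleGraph.cycleGraph (n + 1)).induce (cycleArc a k : Set (Fin (n + 1)))).Connected := by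
  induction k, hk using Nat.le_induction with
  | base =>
    rw [cycleArc_one, Finset.coe_singleton, SimpleGraph.induce_singleton_eq_top]
    exact SimpleGraph.connected_top
  | succ k hk ih =>
    by_cases hmem : a + (k : Fin (n + 1)) ∈ cycleArc a k
    · rwa [cycleArc_succ, Finset.insert_eq_of_mem hmem]
    · obtain ⟨k, rfl⟩ := Nat.exists_eq_add_of_le' hk
      have hlast : a + (k : Fin (n + 1)) ∈ cycleArc a (k + 1) :=
        mem_cycleArc.mpr ⟨k, k.lt_succ_self, rfl⟩
      have hadj : (SimpleGraph.cycleGraph (n + 1)).Adj (a + ((k + 1 : ℕ) : Fin (n + 1)))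
          (a + (k : Fin (n + 1))) :=
        cycleGraph_adj_iff.mpr
          ⟨fun h => hmem (h ▸ hlast), Or.inl (by push_cast; ring)⟩
      rw [cycleArc_succ, Finset.coe_insert, Set.insert_eq]
      exact SimpleGraph.connected_induce_union (by simp) ih.preconnected
        (Set.mem_singleton _) hlast hadj

theorem exists_cycleArc_eq_insert {a u v : Fin (n + 1)} {k : ℕ} (hu : u ∈ cycleArc a k)
    (hv : v ∉ cycleArc a k) (huv : (SimpleGraph.cycleGraph (n + 1)).Adj u v) :
    ∃ b, cycleArc b (k + 1) = insert v (cycleArc a k) := by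
  rcases (cycleGraph_adj_iff.mp huv).2 with rfl | rfl
  · have hva : v + 1 = a := eq_left_of_mem_cycleArc hu (by rwa [add_sub_cancel_right])
    exact ⟨v, by rw [cycleArc_succ', hva]⟩
  · obtain ⟨i, hik, rfl⟩ := mem_cycleArc.mp hu
    have hi : i + 1 = k := by
      by_contra hne
      refine hv (mem_cycleArc.mpr ⟨i + 1, by omega, ?_⟩)
      push_cast
      ring
    refine ⟨a, ?_⟩
    rw [cycleArc_succ, ← hi]
    push_cast
    rw [add_assoc]

theorem exists_cycleArc_subset {S : Finset (Fin (n + 1))}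
    (hS : ((SimpleGraph.cycleGraph (n + 1)).induce (S : Set (Fin (n + 1)))).Connected)
    {k : ℕ} (hk : 0 < k) (hkS : k ≤ S.card) : ∃ a, cycleArc a k ⊆ S := by
  induction k, hk using Nat.le_induction with
  | base =>
    obtain ⟨⟨a, ha⟩⟩ := hS.nonempty
    exact ⟨a, by rwa [cycleArc_one, Finset.singleton_subset_iff]⟩
  | succ k hk ih =>
    obtain ⟨a, haS⟩ := ih (by omega)
    have hne : cycleArc a k ≠ S := by
      rintro rfl
      have := card_cycleArc_le a k
      omega
    obtain ⟨u, hu, v, hvS, hv, huv⟩ := exists_adj_of_induce_preconnected hS.preconnected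
      ⟨a, left_mem_cycleArc a hk⟩ (Finset.coe_ssubset.mpr (haS.ssubset_of_ne hne))
    obtain ⟨b, hb⟩ := exists_cycleArc_eq_insert hu hv huv
    exact ⟨b, hb ▸ Finset.insert_subset hvS haS⟩

theorem cycleArc_eq_univ (a : Fin (n + 1)) : cycleArc a (n + 1) = Finset.univ := by
  rw [← Finset.card_eq_iff_eq_univ, card_cycleArc a le_rfl, Fintype.card_fin]

theorem induce_cycleGraph_connected_iff {S : Finset (Fin (n + 1))} :
    ((SimpleGraph.cycleGraph (n + 1)).induce (S : Set (Fin (n + 1)))).Connected ↔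
      S = Finset.univ ∨ ∃ a, ∃ i < n, cycleArc a (i + 1) = S := by
  constructor
  · intro hS
    have hpos : 0 < S.card := Finset.card_pos.mpr (Set.nonempty_coe_sort.mp hS.nonempty)
    have hle : S.card ≤ n + 1 := card_finset_fin_le S
    obtain ⟨a, ha⟩ := exists_cycleArc_subset hS hpos le_rfl
    have harc : cycleArc a S.card = S := Finset.eq_of_subset_of_card_le ha (card_cycleArc a hle).ge
    rcases hle.eq_or_lt with hfull | hlt
    · exact Or.inl (by rw [← harc, hfull, cycleArc_eq_univ])
    · exact Or.inr ⟨a, S.card - 1, by omega, by rwa [Nat.sub_add_cancel hpos]⟩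
  · rintro (rfl | ⟨a, i, -, rfl⟩)
    · exact cycleArc_eq_univ (0 : Fin (n + 1)) ▸ induce_cycleArc_connected 0 n.succ_pos
    · exact induce_cycleArc_connected a i.succ_pos

end Arcs

theorem nodeRelR_cycleGraph (n : ℕ) (p : ℝ) :
    nodeRelR (SimpleGraph.cycleGraph (n + 1)) p =
      p ^ (n + 1) + (n + 1) * ∑ i ∈ Finset.range n, p ^ (i + 1) * (1 - p) ^ (n - i) := by
  let arcs : Finset (Finset (Fin (n + 1))) :=
    ((Finset.univ : Finset (Fin (n + 1))) ×ˢ Finset.range n).image fun q => cycleArc q.1 (q.2 + 1)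
  have mem_arcs : ∀ S, S ∈ arcs ↔ ∃ a, ∃ i < n, cycleArc a (i + 1) = S := fun S => by
    simp only [arcs, Finset.mem_image, Finset.mem_product, Finset.mem_univ, true_and,
      Finset.mem_range, Prod.exists]
  have univ_notMem : Finset.univ ∉ arcs := by
    rw [mem_arcs]
    rintro ⟨a, i, hi, h⟩
    have hcard := card_cycleArc a (k := i + 1) (by omega)
    rw [h, Finset.card_univ, Fintype.card_fin] at hcard
    omega
  have injOn_arcs : Set.InjOn (fun q : Fin (n + 1) × ℕ => cycleArc q.1 (q.2 + 1))
      ((Finset.univ : Finset (Fin (n + 1))) ×ˢ Finset.range n : Finset (Fin (n + 1) × ℕ)) :=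
    cycleArc_injOn.mono fun q hq => Finset.mem_range.mp (Finset.mem_product.mp hq).2
  have arc_term : ∀ a : Fin (n + 1), ∀ i ∈ Finset.range n,
      p ^ (cycleArc a (i + 1)).card * (1 - p) ^ (n + 1 - (cycleArc a (i + 1)).card) =
        p ^ (i + 1) * (1 - p) ^ (n - i) := fun a i hi => by
    rw [card_cycleArc a (Nat.succ_le_succ (Finset.mem_range.mp hi).le), Nat.add_sub_add_right]
  rw [nodeRelR_eq_sum (s := insert Finset.univ arcs) _ fun S => by
      rw [Finset.mem_insert, mem_arcs, induce_cycleGraph_connected_iff],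
    Finset.sum_insert univ_notMem, Finset.sum_image injOn_arcs, Finset.sum_product,
    Fintype.card_fin, Finset.sum_congr rfl fun a _ => Finset.sum_congr rfl (arc_term a)]
  simp

theorem two_mul_sub_one_mul_nodeRelR_cycleGraph (n : ℕ) (p : ℝ) :
    (2 * p - 1) * nodeRelR (SimpleGraph.cycleGraph (n + 1)) p =
      p * (p ^ n * (2 * p - 1) - (n + 1) * (p - 1) * (p ^ n - (1 - p) ^ n)) := by
  have hsum : ∑ i ∈ Finset.range n, p ^ (i + 1) * (1 - p) ^ (n - i) =
      p * (1 - p) * ∑ i ∈ Finset.range n, p ^ i * (1 - p) ^ (n - 1 - i) := by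
    rw [Finset.mul_sum]
    refine Finset.sum_congr rfl fun i hi => ?_
    have hexp : n - i = n - 1 - i + 1 := by
      have := Finset.mem_range.mp hi
      omega
    rw [hexp]
    ring
  rw [nodeRelR_cycleGraph, hsum]
  linear_combination (n + 1) * p * (1 - p) * geom_sum₂_mul p (1 - p) n

theorem two_mul_sub_one_mul_nodeRelR_cycleGraph_odd (n : ℕ) {p : ℝ} (hp : p ≠ 0) :
    (2 * p - 1) * nodeRelR (SimpleGraph.cycleGraph (2 * n + 1)) p =
      p ^ (2 * n + 1) *
        ((2 * p - 1) - (2 * n + 1) * (p - 1) * (1 - (1 - p⁻¹) ^ (2 * n))) := by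
  have hpow : (1 - p) ^ (2 * n) = p ^ (2 * n) * (1 - p⁻¹) ^ (2 * n) := by
    rw [← mul_pow, mul_one_sub, mul_inv_cancel₀ hp, ← (even_two_mul n).neg_pow, neg_sub]
  rw [two_mul_sub_one_mul_nodeRelR_cycleGraph, hpow]
  push_cast
  ring

theorem sign_nodeRelR_cycleGraph_odd (n : ℕ) {p : ℝ} (hp : 1 / 2 < p) :
    SignType.sign (nodeRelR (SimpleGraph.cycleGraph (2 * n + 1)) p) =
      SignType.sign ((2 * p - 1) - (2 * n + 1) * (p - 1) * (1 - (1 - p⁻¹) ^ (2 * n))) := by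
  have hp0 : 0 < p := by linarith
  have h := congrArg SignType.sign (two_mul_sub_one_mul_nodeRelR_cycleGraph_odd n hp0.ne')
  rwa [sign_mul, sign_mul, sign_pos (show 0 < 2 * p - 1 by linarith), sign_pos (pow_pos hp0 _),
    one_mul, one_mul] at h

section Bonferroni

theorem sum_range_succ_choose_mul_pow {R : Type*} [CommSemiring R] (y : R) (n r : ℕ) :
    ∑ j ∈ Finset.range (r + 1), ((n + 1).choose j : R) * y ^ j =
      ∑ j ∈ Finset.range (r + 1), (n.choose j : R) * y ^ j +
        y * ∑ j ∈ Finset.range r, (n.choose j : R) * y ^ j := by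
  have hshift : ∀ j, y * ((n.choose j : R) * y ^ j) = n.choose j * y ^ (j + 1) := fun j => by ring
  simp only [Finset.sum_range_succ', Nat.choose_succ_succ', Nat.cast_add, add_mul,
    Finset.sum_add_distrib, Finset.mul_sum, hshift, Nat.choose_zero_right]
  ring

theorem bonferroni_one_sub_pow {R : Type*} [CommRing R] [PartialOrder R] [IsOrderedRing R] {x : R}
    (hx0 : 0 ≤ x) (hx1 : x ≤ 1) (n r : ℕ) :
    0 ≤ (-1) ^ r * ((1 - x) ^ n - ∑ j ∈ Finset.range r, (n.choose j : R) * (-x) ^ j) := by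
  induction n generalizing r with
  | zero => cases r <;> simp [Finset.sum_range_succ']
  | succ n ih =>
    cases r with
    | zero => simpa using pow_nonneg (sub_nonneg.mpr hx1) (n + 1)
    | succ r =>
      rw [sum_range_succ_choose_mul_pow]
      refine (add_nonneg (ih (r + 1)) (mul_nonneg hx0 (ih r))).trans_eq ?_
      ring

theorem cast_choose_three {K : Type*} [DivisionRing K] [CharZero K] (n : ℕ) :
    (n.choose 3 : K) = n * (n - 1) * (n - 2) / 6 := by
  rw [Nat.cast_choose_eq_descPochhammer_div]
  simp [descPochhammer_succ_eval, Nat.factorial]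

variable {K : Type*} [Field K] [LinearOrder K] [IsStrictOrderedRing K] {x : K}

theorem one_sub_pow_le_quadratic (hx0 : 0 ≤ x) (hx1 : x ≤ 1) (n : ℕ) :
    (1 - x) ^ n ≤ 1 - n * x + n * (n - 1) / 2 * x ^ 2 := by
  have h := bonferroni_one_sub_pow hx0 hx1 n 3
  simp only [Finset.sum_range_succ, Finset.sum_range_zero, Nat.choose_zero_right,
    Nat.choose_one_right, Nat.cast_choose_two] at h
  push_cast at h
  linarith

theorem cubic_le_one_sub_pow (hx0 : 0 ≤ x) (hx1 : x ≤ 1) (n : ℕ) :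
    1 - n * x + n * (n - 1) / 2 * x ^ 2 - n * (n - 1) * (n - 2) / 6 * x ^ 3 ≤ (1 - x) ^ n := by
  have h := bonferroni_one_sub_pow hx0 hx1 n 4
  simp only [Finset.sum_range_succ, Finset.sum_range_zero, Nat.choose_zero_right,
    Nat.choose_one_right, Nat.cast_choose_two, cast_choose_three] at h
  push_cast at h
  linarith

end Bonferroni

theorem nodeRelR_cycleGraph_odd_two_mul_sq_pos {n : ℕ} (hn : 1 ≤ n) :
    0 < nodeRelR (SimpleGraph.cycleGraph (2 * n + 1)) (2 * (n : ℝ) ^ 2) := by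
  have hn' : (1 : ℝ) ≤ n := by exact_mod_cast hn
  have hp : (1 : ℝ) < 2 * (n : ℝ) ^ 2 := by nlinarith
  rw [← sign_eq_one_iff, sign_nodeRelR_cycleGraph_odd n (by linarith), sign_eq_one_iff, sub_pos]
  have hpow := cubic_le_one_sub_pow (inv_nonneg.mpr (by positivity))
    (inv_le_one_of_one_le₀ hp.le) (2 * n)
  have hbound : (1 : ℝ) - (1 - (2 * (n : ℝ) ^ 2)⁻¹) ^ (2 * n) ≤
      (12 * (n : ℝ) ^ 4 - 6 * n ^ 3 + 5 * n ^ 2 - 3 * n + 1) / (12 * n ^ 5) := by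
    refine (sub_le_sub_left hpow 1).trans_eq ?_
    push_cast
    field_simp
    ring
  have hpoly : (2 * (n : ℝ) ^ 2 - 1) * (12 * n ^ 4 - 6 * n ^ 3 + 5 * n ^ 2 - 3 * n + 1) <
      (2 * n - 1) * (12 * n ^ 5) := by
    have : 0 ≤ (n : ℝ) - 1 := sub_nonneg.mpr hn'
    have hdiff : 0 < 2 * (n : ℝ) ^ 4 + 3 * n * (n - 1) + 1 := by positivity
    linarith
  calc (2 * n + 1) * (2 * (n : ℝ) ^ 2 - 1) * (1 - (1 - (2 * (n : ℝ) ^ 2)⁻¹) ^ (2 * n))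
      ≤ (2 * n + 1) * (2 * (n : ℝ) ^ 2 - 1) *
          ((12 * n ^ 4 - 6 * n ^ 3 + 5 * n ^ 2 - 3 * n + 1) / (12 * n ^ 5)) :=
        mul_le_mul_of_nonneg_left hbound (mul_nonneg (by positivity) (by linarith))
    _ < (2 * n + 1) * (2 * n - 1) := by
        rw [mul_assoc, ← mul_div_assoc]
        exact mul_lt_mul_of_pos_left ((div_lt_iff₀ (by positivity)).mpr hpoly) (by positivity)
    _ = 2 * (2 * (n : ℝ) ^ 2) - 1 := by ring

theorem nodeRelR_cycleGraph_odd_two_mul_sq_sub_one_neg {n : ℕ} (hn : 2 ≤ n) :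
    nodeRelR (SimpleGraph.cycleGraph (2 * n + 1)) (2 * (n : ℝ) ^ 2 - 1) < 0 := by
  have hn' : (2 : ℝ) ≤ n := by exact_mod_cast hn
  have hp : (1 : ℝ) < 2 * (n : ℝ) ^ 2 - 1 := by nlinarith
  have hp0 : (0 : ℝ) < 2 * (n : ℝ) ^ 2 - 1 := one_pos.trans hp
  rw [← sign_eq_neg_one_iff, sign_nodeRelR_cycleGraph_odd n (by linarith), sign_eq_neg_one_iff,
    sub_neg]
  have hpow := one_sub_pow_le_quadratic (inv_nonneg.mpr hp0.le)
    (inv_le_one_of_one_le₀ hp.le) (2 * n)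
  have hbound : n * (4 * n ^ 2 - 2 * n - 1) / (2 * (n : ℝ) ^ 2 - 1) ^ 2 ≤
      1 - (1 - (2 * (n : ℝ) ^ 2 - 1)⁻¹) ^ (2 * n) := by
    refine le_trans (le_of_eq ?_) (sub_le_sub_left hpow 1)
    rw [show 4 * (n : ℝ) ^ 2 - 2 * n - 1 = 2 * (2 * n ^ 2 - 1) - 2 * n + 1 by ring]
    generalize 2 * (n : ℝ) ^ 2 - 1 = p at hp0
    push_cast
    field_simp
    ring
  have hpoly : (4 * n ^ 2 - 3) * (2 * (n : ℝ) ^ 2 - 1) ^ 2 <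
      (2 * n + 1) * (2 * n ^ 2 - 2) * (n * (4 * n ^ 2 - 2 * n - 1)) := by
    have : 0 ≤ (n : ℝ) - 2 := sub_nonneg.mpr hn'
    have hdiff : 0 < 2 * (n : ℝ) ^ 2 * ((n - 2) * (2 * n + 3) + 2) + 2 * n + 3 := by positivity
    linarith
  calc 2 * (2 * (n : ℝ) ^ 2 - 1) - 1
      = 4 * n ^ 2 - 3 := by ring
    _ < (2 * n + 1) * (2 * (n : ℝ) ^ 2 - 2) *
          (n * (4 * n ^ 2 - 2 * n - 1) / (2 * (n : ℝ) ^ 2 - 1) ^ 2) := by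
        rw [← mul_div_assoc, lt_div_iff₀ (pow_pos hp0 2)]
        exact hpoly
    _ ≤ (2 * n + 1) * (2 * (n : ℝ) ^ 2 - 2) *
          (1 - (1 - (2 * (n : ℝ) ^ 2 - 1)⁻¹) ^ (2 * n)) :=
        mul_le_mul_of_nonneg_left hbound (mul_nonneg (by positivity) (by linarith))
    _ = (2 * n + 1) * (2 * (n : ℝ) ^ 2 - 1 - 1) *
          (1 - (1 - (2 * (n : ℝ) ^ 2 - 1)⁻¹) ^ (2 * n)) := by ring

theorem exists_root_nodeRelR_cycleGraph_odd {n : ℕ} (hn : 2 ≤ n) :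
    ∃ p ∈ Set.Ioo (2 * (n : ℝ) ^ 2 - 1) (2 * (n : ℝ) ^ 2),
      nodeRelR (SimpleGraph.cycleGraph (2 * n + 1)) p = 0 :=
  intermediate_value_Ioo (sub_le_self _ zero_le_one) (continuous_nodeRelR _).continuousOn
    ⟨nodeRelR_cycleGraph_odd_two_mul_sq_sub_one_neg hn,
      nodeRelR_cycleGraph_odd_two_mul_sq_pos (one_le_two.trans hn)⟩

/-- For every n ≥ 2, the node reliability polynomial of the odd cycle C_{2n+1} has a real
root in the open interval (2n²-1, 2n²); in particular, the collection of real roots of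
node reliability polynomials over all graphs is unbounded. -/
theorem cycle_nodeRel_root_in_interval_and_real_roots_unbounded :
    (∀ n : ℕ, 2 ≤ n → ∃ p : ℝ,
      2 * (n : ℝ) ^ 2 - 1 < p ∧ p < 2 * (n : ℝ) ^ 2 ∧
      nodeRelR (SimpleGraph.cycleGraph (2 * n + 1)) p = 0) ∧
    (∀ M : ℝ, ∃ (N : ℕ) (G : SimpleGraph (Fin N)) (p : ℝ),
      nodeRelR G p = 0 ∧ M < |p|) := by
  constructor
  · intro n hn
    obtain ⟨p, ⟨hlo, hhi⟩, hroot⟩ := exists_root_nodeRelR_cycleGraph_odd hn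
    exact ⟨p, hlo, hhi, hroot⟩
  · intro M
    obtain ⟨n, hMn⟩ := exists_nat_gt M
    obtain ⟨p, ⟨hlo, -⟩, hroot⟩ := exists_root_nodeRelR_cycleGraph_odd (Nat.le_add_left 2 n)
    refine ⟨_, _, p, hroot, ?_⟩
    push_cast at hlo
    calc M < n := hMn
      _ ≤ 2 * ((n : ℝ) + 2) ^ 2 - 1 := by nlinarith [n.cast_nonneg (α := ℝ)]
      _ ≤ |p| := hlo.le.trans (le_abs_self p)
end

section
/- The collection of all roots of connected set polynomials of connected graphs is dense in the complex plane: for every z ∈ ℂ and every ε > 0 there exist a connected finite simple graph G and a complex number w with |w − z| < ε and C(G; w) = 0. -/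
open scoped Classical

/-!
With `y = x + 1`, the sum of `x ^ #S` over all subsets `S` of a `k`-set is `y ^ k`. A hub joined to
disjoint `h`-cliques, fully to `s` of them and to all but `a` vertices of `r` others, together with
`m` dominating vertices, is therefore a connected graph whose polynomial is a short expression in
powers of `y` and of `Q y = y ^ h - y ^ a + 1`. With `r = n` growing, and `s` or `m` growing
linearly in `n`, its vanishing takes the shape `Q y ^ n * y ^ p n = κ n * u n y`, where
`p n / n → β`, `κ n > 0` grows subexponentially and `u n` converges near `z` to a function that is
nonzero at `z`.

Taking logarithms and dividing by `n`, one has to find `w` near `z` at which a small perturbation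
of `φ = log Q + β log` lies in `2πi ℤ / n`. The function `φ` is not constant, it is purely imaginary
at `z` as soon as `log ‖Q z‖ + β * log ‖z‖ = 0`, and the sets `2πi ℤ / n` become dense in the
imaginary axis, so such a `w` exists by Hurwitz's theorem.

The sign of `β` is what the graphs have to provide. For `‖z‖ < 1` the exponent `p n = h * s` is
positive, which requires `1 < ‖Q z‖`; for `1 < ‖z‖` it is `-(h * n + m)`, which requires
`‖z ^ h‖ < ‖Q z‖`. When `z` is not real, `a` and `h` can be chosen accordingly, because the
arguments of the powers of `z` then enter every open half plane.
-/

open Filter Topology Metric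
open scoped Finset

/-! ### Connected sets of graphs with a hub and cliques -/

lemma sum_pow_card_subset {α R : Type*} [CommSemiring R] (s : Finset α) (x : R) :
    ∑ T ∈ s.powerset, x ^ #T = (1 + x) ^ #s := by
  simpa [add_comm] using Finset.sum_pow_mul_eq_add_pow x 1 s

lemma sum_pow_card {R : Type*} [CommSemiring R] (α : Type*) [Fintype α] (x : R) :
    ∑ T : Finset α, x ^ #T = (1 + x) ^ Fintype.card α := by
  simpa using sum_pow_card_subset (Finset.univ : Finset α) x

lemma sum_pow_card_nonempty {R : Type*} [CommRing R] (α : Type*) [Fintype α] (x : R) :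
    ∑ T : Finset α with T.Nonempty, x ^ #T = (1 + x) ^ Fintype.card α - 1 := by
  have hsplit := Finset.sum_filter_add_sum_filter_not Finset.univ
    (fun T : Finset α => T.Nonempty) fun T => x ^ #T
  simp only [Finset.not_nonempty_iff_eq_empty, Finset.filter_eq', Finset.mem_univ, if_true,
    Finset.sum_singleton, Finset.card_empty, pow_zero, sum_pow_card] at hsplit
  exact eq_sub_of_add_eq hsplit

lemma sum_finset_option {α M : Type*} [Fintype α] [AddCommMonoid M]
    (f : Finset (Option α) → M) :
    ∑ S, f S = ∑ T : Finset α, f (T.map .some) + ∑ T : Finset α, f T.insertNone := by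
  rw [← Finset.sum_filter_not_add_sum_filter Finset.univ (none ∈ ·)]
  congr 1
  · refine Finset.sum_nbij' Finset.eraseNone (·.map .some) ?_ ?_ ?_ ?_ ?_ <;>
      simp +contextual [Finset.map_some_eraseNone]
  · refine Finset.sum_nbij' Finset.eraseNone (Finset.insertNone ·) ?_ ?_ ?_ ?_ ?_ <;>
      simp +contextual [Finset.insertNone_eraseNone]

section ConnectedSets

variable {V W : Type*}

/-- The connected sets of `G`: the vertex sets inducing a connected (so nonempty) subgraph. -/
def IsConnectedSet (G : SimpleGraph V) (S : Finset V) : Prop :=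
  (G.induce (S : Set V)).Connected

variable [Fintype V] [Fintype W]

lemma connPoly_eq_sum_connected (G : SimpleGraph V) (x : ℂ) :
    connPoly G x = ∑ S with IsConnectedSet G S, x ^ #S := by
  have card_mem : ∀ S ∈ Finset.univ.filter (IsConnectedSet G),
      #S ∈ Finset.Icc 1 (Fintype.card V) := fun S hS => by
    have hconn : IsConnectedSet G S := (Finset.mem_filter_univ _).1 hS
    obtain ⟨v, hv⟩ := hconn.nonempty
    exact Finset.mem_Icc.2 ⟨Finset.card_pos.2 ⟨v, hv⟩, S.card_le_univ⟩
  rw [← Finset.sum_fiberwise_of_maps_to card_mem]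
  refine Finset.sum_congr rfl fun k _ => ?_
  rw [Finset.sum_congr rfl fun S hS => by rw [(Finset.mem_filter.1 hS).2], Finset.sum_const,
    nsmul_eq_mul, Finset.filter_filter, connCount]
  simp only [and_comm, IsConnectedSet]

lemma connPoly_congr {G : SimpleGraph V} {H : SimpleGraph W} (e : G ≃g H) :
    connPoly G = connPoly H := by
  funext x
  simp only [connPoly_eq_sum_connected, Finset.sum_filter]
  refine Fintype.sum_equiv e.toEquiv.finsetCongr _ _ fun S => ?_
  have hbij : Set.BijOn e (S : Set V) (e.toEquiv.finsetCongr S : Finset W) := by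
    rw [Equiv.finsetCongr_apply, Finset.coe_map]
    exact e.injective.injOn.bijOn_image
  simp only [IsConnectedSet, (e.induce hbij).connected_iff, Equiv.finsetCongr_apply,
    Finset.card_map]

end ConnectedSets

section AdjoinVertex

variable {V : Type*}

/-- The graph obtained from `G` by adjoining one vertex, `none`, with neighbourhood `N`. -/
def adjoinVertex (G : SimpleGraph V) (N : Set V) : SimpleGraph (Option V) where
  Adj
    | none, none => False
    | none, some v => v ∈ N
    | some u, none => u ∈ N
    | some u, some v => G.Adj u v
  symm := ⟨by rintro (_ | u) (_ | v) h <;> first | exact h | exact h.symm⟩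
  loopless := ⟨by rintro (_ | u) h; exacts [h, G.irrefl h]⟩

/-- Every connected component of `G` meets `N`. -/
def IsRootedIn (G : SimpleGraph V) (N : Set V) : Prop :=
  ∀ v, ∃ u ∈ N, G.Reachable v u

/-- `G` as the induced subgraph of `adjoinVertex G N` on the old vertices. -/
def someEmbedding (G : SimpleGraph V) (N : Set V) : G ↪g adjoinVertex G N :=
  ⟨.some, Iff.rfl⟩

lemma someEmbedding_apply (G : SimpleGraph V) (N : Set V) (v : V) :
    someEmbedding G N v = some v := rfl

/-- Adjoining a vertex commutes with passing to induced subgraphs. -/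
def adjoinVertexInduceEmbedding (G : SimpleGraph V) (N T : Set V) :
    adjoinVertex (G.induce T) (Subtype.val ⁻¹' N) ↪g adjoinVertex G N where
  toEmbedding := (Function.Embedding.subtype (· ∈ T)).optionMap
  map_rel_iff' := by rintro (_ | u) (_ | v) <;> rfl

lemma range_adjoinVertexInduceEmbedding (G : SimpleGraph V) (N T : Set V) :
    Set.range (adjoinVertexInduceEmbedding G N T) = insert none (some '' T) := by
  ext v
  change (∃ u : Option T, u.map Subtype.val = v) ↔ _
  cases v <;> simp [Option.exists]

lemma adjoinVertex_connected_iff {G : SimpleGraph V} {N : Set V} :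
    (adjoinVertex G N).Connected ↔ IsRootedIn G N := by
  constructor
  · intro hconn v
    have root_of_walk : ∀ {a b : Option V}, (adjoinVertex G N).Walk a b → b = none →
        ∀ v, a = some v → ∃ u ∈ N, G.Reachable v u := by
      intro a b p
      induction p with
      | nil => rintro rfl v ⟨⟩
      | @cons a b _ hadj p ih =>
        rintro rfl v rfl
        cases b with
        | none => exact ⟨v, hadj, .rfl⟩
        | some w =>
          obtain ⟨u, hu, hwu⟩ := ih rfl w rfl
          have hvw : G.Adj v w := hadj
          exact ⟨u, hu, hvw.reachable.trans hwu⟩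
    obtain ⟨p⟩ := hconn.preconnected (some v) none
    exact root_of_walk p rfl v rfl
  · intro hroot
    rw [SimpleGraph.connected_iff_exists_forall_reachable]
    refine ⟨none, ?_⟩
    rintro (_ | v)
    · exact .rfl
    · obtain ⟨u, hu, hvu⟩ := hroot v
      have hadj : (adjoinVertex G N).Adj none (some u) := hu
      exact hadj.reachable.trans (hvu.symm.map (someEmbedding G N).toHom)

lemma induce_connected_iff_of_range_eq {W : Type*} {G : SimpleGraph V} {H : SimpleGraph W}
    (f : G ↪g H) {s : Set W} (hs : Set.range f = s) :
    (H.induce s).Connected ↔ G.Connected := by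
  subst hs
  exact f.isoInduceRange.connected_iff.symm

lemma connPoly_adjoinVertex [Fintype V] (G : SimpleGraph V) (N : Set V) (x : ℂ) :
    connPoly (adjoinVertex G N) x = connPoly G x + x *
      ∑ T ∈ Finset.univ.filter fun T : Finset V =>
        IsRootedIn (G.induce (T : Set V)) (Subtype.val ⁻¹' N), x ^ #T := by
  have connected_map_some (T : Finset V) :
      IsConnectedSet (adjoinVertex G N) (T.map .some) ↔ IsConnectedSet G T :=
    induce_connected_iff_of_range_eq ((someEmbedding G N).comp (.induce (T : Set V))) <| by
      ext a; simp [someEmbedding_apply]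
  have connected_insertNone (T : Finset V) :
      IsConnectedSet (adjoinVertex G N) T.insertNone ↔
        IsRootedIn (G.induce (T : Set V)) (Subtype.val ⁻¹' N) :=
    (induce_connected_iff_of_range_eq (adjoinVertexInduceEmbedding G N T) <| by
      rw [range_adjoinVertexInduceEmbedding]
      ext (_ | v) <;> simp).trans adjoinVertex_connected_iff
  simp only [connPoly_eq_sum_connected, Finset.sum_filter, sum_finset_option,
    connected_map_some, connected_insertNone, Finset.card_map, Finset.card_insertNone,
    Finset.mul_sum, mul_ite, mul_zero, pow_succ']

lemma connPoly_adjoinVertex_univ [Fintype V] (G : SimpleGraph V) (x : ℂ) :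
    connPoly (adjoinVertex G Set.univ) x = connPoly G x + x * (1 + x) ^ Fintype.card V := by
  have rooted (T : Finset V) : IsRootedIn (G.induce (T : Set V)) Set.univ :=
    fun v => ⟨v, trivial, .rfl⟩
  simp only [connPoly_adjoinVertex, Set.preimage_univ, rooted, Finset.filter_true, sum_pow_card]

end AdjoinVertex

lemma exists_connPoly_add_dominating {V : Type*} [Fintype V] {G : SimpleGraph V}
    (hG : G.Connected) (m : ℕ) :
    ∃ H : SimpleGraph (Fin (Fintype.card V + m)), H.Connected ∧ ∀ x,
      connPoly H x = connPoly G x + ((1 + x) ^ m - 1) * (1 + x) ^ Fintype.card V := by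
  induction m with
  | zero =>
    exact ⟨G.overFin rfl, (G.overFinIso rfl).connected_iff.1 hG, fun x => by
      simp [connPoly_congr (G.overFinIso rfl)]⟩
  | succ m ih =>
    obtain ⟨H, -, hpoly⟩ := ih
    have hcard : Fintype.card (Option (Fin (Fintype.card V + m))) = Fintype.card V + (m + 1) := by
      simp [add_assoc]
    let e := (adjoinVertex H Set.univ).overFinIso hcard
    refine ⟨(adjoinVertex H Set.univ).overFin hcard, e.connected_iff.1 ?_, fun x => ?_⟩
    · exact adjoinVertex_connected_iff.2 fun v => ⟨v, trivial, .rfl⟩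
    · rw [← connPoly_congr e, connPoly_adjoinVertex_univ, hpoly, Fintype.card_fin]
      ring

section Cliques

variable {ι κ : Type*}

/-- The disjoint union of complete graphs on `κ`, one for each `i : ι`. -/
def cliques (ι κ : Type*) : SimpleGraph (ι × κ) :=
  (⊥ : SimpleGraph ι) □ (⊤ : SimpleGraph κ)

lemma cliques_adj {p q : ι × κ} : (cliques ι κ).Adj p q ↔ p.1 = q.1 ∧ p.2 ≠ q.2 := by
  simp [cliques, SimpleGraph.boxProd_adj, and_comm]

lemma reachable_induce_cliques_iff {T : Set (ι × κ)} {p q : T} :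
    ((cliques ι κ).induce T).Reachable p q ↔ p.1.1 = q.1.1 := by
  constructor
  · rintro ⟨w⟩
    induction w with
    | nil => rfl
    | cons hadj _ ih => exact (cliques_adj.1 hadj).1.trans ih
  · intro hpq
    by_cases hne : p = q
    · rw [hne]
    · have hadj : (cliques ι κ).Adj p.1 q.1 :=
        cliques_adj.2 ⟨hpq, fun h => hne (Subtype.ext (Prod.ext hpq h))⟩
      exact SimpleGraph.Adj.reachable hadj

lemma isRootedIn_induce_cliques_iff {T N : Set (ι × κ)} :
    IsRootedIn ((cliques ι κ).induce T) (Subtype.val ⁻¹' N) ↔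
      ∀ i k, (i, k) ∈ T → ∃ l, (i, l) ∈ T ∧ (i, l) ∈ N := by
  simp only [IsRootedIn, reachable_induce_cliques_iff]
  constructor
  · intro hroot i k hk
    obtain ⟨⟨⟨j, l⟩, hl⟩, hN, rfl⟩ := hroot ⟨(i, k), hk⟩
    exact ⟨l, hl, hN⟩
  · rintro hroot ⟨⟨i, k⟩, hk⟩
    obtain ⟨l, hl, hN⟩ := hroot i k hk
    exact ⟨⟨(i, l), hl⟩, hN, rfl⟩

/-- The set of second coordinates of the points of `T` whose first coordinate is `i`. -/
noncomputable def fiber (T : Finset (ι × κ)) (i : ι) : Finset κ :=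
  T.preimage (Prod.mk i) (Prod.mk_right_injective i).injOn

lemma mem_fiber {T : Finset (ι × κ)} {i : ι} {k : κ} : k ∈ fiber T i ↔ (i, k) ∈ T :=
  Finset.mem_preimage

lemma isConnectedSet_cliques_iff {T : Finset (ι × κ)} :
    IsConnectedSet (cliques ι κ) T ↔ ∃ (i : ι) (K : Finset κ), K.Nonempty ∧ {i} ×ˢ K = T := by
  constructor
  · intro hT
    obtain ⟨⟨⟨i, k⟩, hk⟩⟩ := hT.nonempty
    have first_eq (j l) (hl : (j, l) ∈ T) : j = i :=
      reachable_induce_cliques_iff.1 (hT.preconnected ⟨(j, l), hl⟩ ⟨(i, k), hk⟩)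
    refine ⟨i, fiber T i, ⟨k, mem_fiber.2 hk⟩, Finset.ext ?_⟩
    rintro ⟨j, l⟩
    rw [Finset.mem_product, Finset.mem_singleton, mem_fiber]
    refine ⟨?_, fun hl => ?_⟩
    · rintro ⟨rfl, hl⟩
      exact hl
    · obtain rfl := first_eq j l hl
      exact ⟨rfl, hl⟩
  · rintro ⟨i, K, ⟨k, hk⟩, rfl⟩
    have first_eq (p : ι × κ) (hp : p ∈ ({i} : Finset ι) ×ˢ K) : p.1 = i :=
      Finset.mem_singleton.1 (Finset.mem_product.1 hp).1
    have hmem : (i, k) ∈ ({i} : Finset ι) ×ˢ K := by simpa using hk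
    rw [IsConnectedSet, SimpleGraph.connected_iff_exists_forall_reachable]
    exact ⟨⟨(i, k), hmem⟩, fun q => reachable_induce_cliques_iff.2 (first_eq q q.2).symm⟩

variable [Fintype ι]

lemma card_eq_sum_card_fiber (T : Finset (ι × κ)) : #T = ∑ i, #(fiber T i) := by
  rw [Finset.card_eq_sum_card_fiberwise (f := Prod.fst) (t := Finset.univ) (by simp)]
  refine Finset.sum_congr rfl fun i _ => ?_
  refine Finset.card_bij' (fun p _ => p.2) (fun k _ => (i, k)) ?_ ?_ ?_ ?_ <;>
    simp +contextual [mem_fiber, eq_comm]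

variable [Fintype κ]

lemma connPoly_cliques (x : ℂ) :
    connPoly (cliques ι κ) x = Fintype.card ι * ((1 + x) ^ Fintype.card κ - 1) := by
  have hsum : connPoly (cliques ι κ) x =
      ∑ q ∈ (Finset.univ : Finset ι) ×ˢ Finset.univ.filter fun K : Finset κ => K.Nonempty,
        x ^ #q.2 := by
    rw [connPoly_eq_sum_connected]
    symm
    apply Finset.sum_bij fun q _ => ({q.1} : Finset ι) ×ˢ q.2
    · intro q hq
      rw [Finset.mem_filter_univ]
      exact isConnectedSet_cliques_iff.2 ⟨q.1, q.2, by simpa using hq, rfl⟩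
    · rintro q hq ⟨j, L⟩ - heq
      obtain ⟨k, hk⟩ : q.2.Nonempty := by simpa using hq
      have mem_iff (i : ι) (l : κ) : l ∈ q.2 ∧ q.1 = i ↔ l ∈ L ∧ j = i := by
        simpa using Finset.ext_iff.1 heq (i, l)
      obtain rfl : j = q.1 := ((mem_iff q.1 k).1 ⟨hk, rfl⟩).2
      exact Prod.ext rfl (Finset.ext fun l => by simpa using mem_iff q.1 l)
    · intro T hT
      obtain ⟨i, K, hK, rfl⟩ :=
        isConnectedSet_cliques_iff.1 (Finset.mem_filter_univ _ |>.1 hT)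
      exact ⟨(i, K), by simpa using hK, rfl⟩
    · simp
  simp [hsum, Finset.sum_product, sum_pow_card_nonempty, mul_sub]

lemma sum_pow_card_forall_fiber {R : Type*} [CommSemiring R] (P : ι → Finset κ → Prop) (x : R) :
    ∑ T ∈ Finset.univ.filter fun T : Finset (ι × κ) => ∀ i, P i (fiber T i), x ^ #T =
      ∏ i, ∑ K ∈ Finset.univ.filter (P i), x ^ #K := by
  have fiber_ofFibers (K : ι → Finset κ) (i : ι) :
      fiber (Finset.univ.filter fun p : ι × κ => p.2 ∈ K p.1) i = K i := by
    ext k; simp [mem_fiber]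
  rw [Finset.prod_univ_sum]
  refine Finset.sum_nbij' (fun T i => fiber T i)
    (fun K => Finset.univ.filter fun p : ι × κ => p.2 ∈ K p.1) ?_ ?_ ?_ ?_ ?_
  · simp
  · simp [fiber_ofFibers]
  · simp [mem_fiber]
  · simp [fiber_ofFibers]
  · intro T _
    rw [card_eq_sum_card_fiber, Finset.prod_pow_eq_pow_sum]

/-- The condition on the trace `K` of a vertex set on a clique that it be rooted in `B`. -/
def EmptyOrMeets (K B : Finset κ) : Prop :=
  K = ∅ ∨ ¬Disjoint K B

lemma sum_pow_card_emptyOrMeets {R : Type*} [CommRing R] (B : Finset κ) (x : R) :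
    ∑ K ∈ Finset.univ.filter fun K => EmptyOrMeets K B, x ^ #K =
      (1 + x) ^ Fintype.card κ - (1 + x) ^ (Fintype.card κ - #B) + 1 := by
  have hfilter : (Finset.univ.filter fun K => EmptyOrMeets K B) =
      Finset.univ \ Bᶜ.powerset.erase ∅ := by
    ext K
    simp [EmptyOrMeets, Finset.subset_compl_iff_disjoint_right, imp_iff_not_or, or_comm]
  rw [hfilter, Finset.sum_sdiff_eq_sub (Finset.subset_univ _),
    Finset.sum_erase_eq_sub (Finset.empty_mem_powerset _), sum_pow_card, sum_pow_card_subset,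
    Finset.card_empty, Finset.card_compl, pow_zero]
  ring

lemma sum_pow_card_rooted_cliques {R : Type*} [CommRing R] (B : ι → Finset κ) (x : R) :
    ∑ T ∈ Finset.univ.filter fun T : Finset (ι × κ) =>
        IsRootedIn ((cliques ι κ).induce (T : Set (ι × κ)))
          (Subtype.val ⁻¹' {p : ι × κ | p.2 ∈ B p.1}), x ^ #T =
      ∏ i, ((1 + x) ^ Fintype.card κ - (1 + x) ^ (Fintype.card κ - #(B i)) + 1) := by
  have rooted_iff (T : Finset (ι × κ)) :
      IsRootedIn ((cliques ι κ).induce (T : Set (ι × κ)))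
          (Subtype.val ⁻¹' {p : ι × κ | p.2 ∈ B p.1}) ↔
        ∀ i, EmptyOrMeets (fiber T i) (B i) := by
    rw [isRootedIn_induce_cliques_iff]
    refine forall_congr' fun i => ?_
    rw [EmptyOrMeets, Finset.not_disjoint_iff, Finset.eq_empty_iff_forall_notMem, ← forall_or_right]
    simp only [mem_fiber, imp_iff_not_or, Finset.mem_coe, Set.mem_ofPred_eq]
  simp only [rooted_iff]
  rw [sum_pow_card_forall_fiber fun i K => EmptyOrMeets K (B i)]
  simp only [sum_pow_card_emptyOrMeets]

end Cliques

/-- The factor `∑ x ^ |K|`, with `y = 1 + x`, over the subsets `K` of an `h`-clique that are empty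
or meet a fixed set of `h - a` vertices. -/
def legFactor (h a : ℕ) (y : ℂ) : ℂ := y ^ h - y ^ a + 1

/-- The graph consists of `r + s` disjoint `h`-cliques, a hub joined to
`h - a` vertices of `r` of the cliques and to all vertices of the other `s`, and `m` dominating
vertices. -/
lemma exists_connected_graph (m r s : ℕ) {a h : ℕ} (hah : a < h) :
    ∃ (n : ℕ) (G : SimpleGraph (Fin n)), G.Connected ∧ ∀ y : ℂ, connPoly G (y - 1) =
      (y ^ m - 1) * y ^ (1 + (r + s) * h) + (y - 1) * (legFactor h a y ^ r * (y ^ h) ^ s) +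
        (r + s) * (y ^ h - 1) := by
  let c : Fin r ⊕ Fin s → ℕ := Sum.elim (fun _ => a) (fun _ => 0)
  have hc (i) : c i < h := by cases i <;> simp only [c, Sum.elim_inl, Sum.elim_inr] <;> omega
  let B (i) : Finset (Fin h) := Finset.Ici ⟨c i, hc i⟩
  have hB (i) : h - #(B i) = c i := by
    rw [Fin.card_Ici]
    exact Nat.sub_sub_self (hc i).le
  let G := adjoinVertex (cliques (Fin r ⊕ Fin s) (Fin h)) {p | p.2 ∈ B p.1}
  have hG : G.Connected := adjoinVertex_connected_iff.2 <| by
    rintro ⟨i, k⟩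
    refine ⟨(i, ⟨c i, hc i⟩), Finset.mem_Ici.2 le_rfl, ?_⟩
    by_cases hk : k = ⟨c i, hc i⟩
    · rw [hk]
    · have hadj : (cliques _ _).Adj (i, k) (i, ⟨c i, hc i⟩) := cliques_adj.2 ⟨rfl, hk⟩
      exact hadj.reachable
  obtain ⟨H, hH, hpoly⟩ := exists_connPoly_add_dominating hG m
  refine ⟨_, H, hH, fun y => ?_⟩
  have hrooted := sum_pow_card_rooted_cliques B (y - 1)
  rw [hpoly, connPoly_adjoinVertex, connPoly_cliques, hrooted]
  simp only [Fintype.card_sum, Fintype.card_fin, Nat.cast_add, add_sub_cancel, hB,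
    Fintype.prod_sum_type, Sum.elim_inl, Finset.prod_const, Finset.card_univ, Sum.elim_inr,
    pow_zero, sub_add_cancel, Fintype.card_option, Fintype.card_prod, legFactor, c]
  ring

/-! ### Solutions of `f w ^ n * g w ^ p n = κ n * u n w` -/

lemma ball_subset_image_closedBall_of_le_norm_sub {f : ℂ → ℂ} {z : ℂ} {r δ : ℝ}
    (hf : DiffContOnCl ℂ f (ball z r)) (hr : 0 < r) (hδ : 0 < δ)
    (hsphere : ∀ w ∈ sphere z r, δ ≤ ‖f w - f z‖) :
    ball (f z) (δ / 2) ⊆ f '' closedBall z r := by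
  refine hf.ball_subset_image_closedBall hr hsphere fun hconst => ?_
  simp only [not_not] at hconst
  have eq_on_ball : Set.EqOn f (fun _ => f z) (ball z r) :=
    (hf.differentiableOn.analyticOnNhd isOpen_ball).eqOn_of_preconnected_of_eventuallyEq
      analyticOnNhd_const (convex_ball z r).isPreconnected (mem_ball_self hr) hconst
  obtain ⟨w, hw⟩ := NormedSpace.sphere_nonempty (x := z).2 hr.le
  have hwz : f w = f z := eq_on_ball.of_subset_closure
    (closure_ball z hr.ne' ▸ hf.continuousOn_ball) continuousOn_const ball_subset_closedBall
    (closure_ball z hr.ne').ge (sphere_subset_closedBall hw)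
  exact hδ.not_ge (by simpa [hwz] using hsphere w hw)

lemma exists_sphere_le_norm_sub {f : ℂ → ℂ} {z : ℂ} {U : Set ℂ} (hf : AnalyticAt ℂ f z)
    (hne : ∃ᶠ w in 𝓝 z, f w ≠ f z) (hU : U ∈ 𝓝 z) :
    ∃ r > 0, closedBall z r ⊆ U ∧ ∃ δ > 0, ∀ w ∈ sphere z r, δ ≤ ‖f w - f z‖ := by
  have hne' : ∀ᶠ w in 𝓝[≠] z, f w ≠ f z :=
    (hf.eventually_eq_or_eventually_ne analyticAt_const).resolve_left
      fun h => hne (h.mono fun _ hw => not_not.2 hw)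
  rw [eventually_nhdsWithin_iff] at hne'
  obtain ⟨r, hr, hball⟩ := nhds_basis_closedBall.mem_iff.1
    (inter_mem hU (hne'.and hf.eventually_analyticAt))
  refine ⟨r, hr, fun w hw => (hball hw).1, ?_⟩
  have hcont : ContinuousOn (fun w => ‖f w - f z‖) (sphere z r) := fun w hw =>
    ((hball (sphere_subset_closedBall hw)).2.2.continuousAt.sub
      continuousAt_const).norm.continuousWithinAt
  obtain ⟨w, hw, hmin⟩ := (isCompact_sphere z r).exists_isMinOn
    (NormedSpace.sphere_nonempty.2 hr.le) hcont
  exact ⟨_, norm_sub_pos_iff.2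
    ((hball (sphere_subset_closedBall hw)).2.1 (ne_of_mem_sphere hw hr.ne')), fun v hv => hmin hv⟩

/-- Hurwitz's theorem, with moving targets `t n`. -/
lemma eventually_exists_eq_of_tendstoUniformlyOn {α : Type*} {l : Filter α} [l.NeBot]
    {ψ : α → ℂ → ℂ} {φ : ℂ → ℂ} {t : α → ℂ} {z : ℂ} {U V : Set ℂ} (hU : U ∈ 𝓝 z)
    (hψ : ∀ᶠ n in l, DifferentiableOn ℂ (ψ n) U) (hlim : TendstoUniformlyOn ψ φ l U)
    (hne : ∃ᶠ w in 𝓝 z, φ w ≠ φ z) (ht : Tendsto t l (𝓝 (φ z))) (hV : V ∈ 𝓝 z) :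
    ∀ᶠ n in l, ∃ w ∈ V, ψ n w = t n := by
  have hφ : AnalyticAt ℂ φ z := by
    have hdiff : DifferentiableOn ℂ φ (interior U) :=
      (hlim.mono interior_subset).tendstoLocallyUniformlyOn.differentiableOn
        (hψ.mono fun n hn => hn.mono interior_subset) isOpen_interior
    exact hdiff.analyticAt (interior_mem_nhds.2 hU)
  obtain ⟨r, hr, hball, δ, hδ, hsphere⟩ := exists_sphere_le_norm_sub hφ hne (inter_mem hU hV)
  have hzr : z ∈ closedBall z r := mem_closedBall_self hr.le
  filter_upwards [hψ, Metric.tendstoUniformlyOn_iff.1 hlim (δ / 8) (by positivity),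
    Metric.tendsto_nhds.1 ht (δ / 8) (by positivity)] with n hdiff hclose htn
  simp only [dist_eq_norm] at hclose htn
  have hsphere' : ∀ w ∈ sphere z r, δ / 2 ≤ ‖ψ n w - ψ n z‖ := fun w hw => by
    have htri := norm_add₃_le (a := φ w - ψ n w) (b := ψ n w - ψ n z) (c := ψ n z - φ z)
    rw [sub_add_sub_cancel, sub_add_sub_cancel, norm_sub_rev (ψ n z)] at htri
    linarith [hsphere w hw, hclose w (hball (sphere_subset_closedBall hw)).1,
      hclose z (hball hzr).1]
  have hdcl : DiffContOnCl ℂ (ψ n) (ball z r) := by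
    apply DifferentiableOn.diffContOnCl
    rw [closure_ball z hr.ne']
    exact hdiff.mono fun w hw => (hball hw).1
  have htball : t n ∈ ball (ψ n z) (δ / 2 / 2) := by
    rw [mem_ball_iff_norm]
    linarith [norm_sub_le_norm_sub_add_norm_sub (t n) (φ z) (ψ n z), hclose z (hball hzr).1]
  obtain ⟨w, hw, hwt⟩ :=
    ball_subset_image_closedBall_of_le_norm_sub hdcl hr (by positivity) hsphere' htball
  exact ⟨w, (hball hw).2, hwt⟩

lemma tendsto_round_mul_div_atTop (c : ℝ) :
    Tendsto (fun n : ℕ => (round (n * c) : ℝ) / n) atTop (𝓝 c) := by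
  refine tendsto_iff_norm_sub_tendsto_zero.2 (squeeze_zero' (.of_forall fun _ => norm_nonneg _) ?_
    (tendsto_const_div_atTop_nhds_zero_nat (1 / 2 : ℝ)))
  filter_upwards [eventually_gt_atTop 0] with n hn
  have hn' : (0 : ℝ) < n := Nat.cast_pos.2 hn
  rw [div_sub' hn'.ne', norm_div, Real.norm_natCast, Real.norm_eq_abs, abs_sub_comm]
  exact div_le_div_of_nonneg_right (abs_sub_round _) hn'.le

lemma eventually_exists_exp_nat_mul_eq_one {ψ : ℕ → ℂ → ℂ} {φ : ℂ → ℂ} {z : ℂ} {U V : Set ℂ}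
    (hU : U ∈ 𝓝 z) (hψ : ∀ᶠ n in atTop, DifferentiableOn ℂ (ψ n) U)
    (hlim : TendstoUniformlyOn ψ φ atTop U) (hne : ∃ᶠ w in 𝓝 z, φ w ≠ φ z)
    (hre : (φ z).re = 0) (hV : V ∈ 𝓝 z) :
    ∀ᶠ n : ℕ in atTop, ∃ w ∈ V, Complex.exp (n * ψ n w) = 1 := by
  -- the targets are points of `2πi ℤ / n` approaching the purely imaginary number `φ z`
  let k (n : ℕ) : ℤ := round (n * ((φ z).im / (2 * Real.pi)))
  have ht : Tendsto (fun n : ℕ => (((k n : ℝ) / n : ℝ) : ℂ) * (2 * Real.pi * Complex.I)) atTop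
      (𝓝 (φ z)) := by
    have hφz : φ z = (((φ z).im / (2 * Real.pi) : ℝ) : ℂ) * (2 * Real.pi * Complex.I) := by
      conv_lhs => rw [← Complex.re_add_im (φ z), hre]
      push_cast
      field_simp
      rw [zero_add]
    rw [hφz]
    exact ((Complex.continuous_ofReal.tendsto _).comp
      (tendsto_round_mul_div_atTop _)).mul_const _
  filter_upwards [eventually_exists_eq_of_tendstoUniformlyOn hU hψ hlim hne ht hV,
    eventually_ne_atTop 0] with n ⟨w, hw, hwt⟩ hn
  refine ⟨w, hw, Complex.exp_eq_one_iff.2 ⟨k n, ?_⟩⟩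
  rw [hwt]
  push_cast
  field_simp

lemma exists_analyticAt_exp_eq_self {c : ℂ} (hc : c ≠ 0) :
    ∃ L : ℂ → ℂ, AnalyticAt ℂ L c ∧ ∀ᶠ w in 𝓝 c, Complex.exp (L w) = w := by
  refine ⟨fun w => Complex.log (w / c) + Complex.log c, ?_, ?_⟩
  · refine (AnalyticAt.clog (analyticAt_id.div_const (c := c)) ?_).add analyticAt_const
    simp [hc]
  · filter_upwards [eventually_ne_nhds hc] with w hw
    rw [Complex.exp_add, Complex.exp_log (div_ne_zero hw hc), Complex.exp_log hc,
      div_mul_cancel₀ _ hc]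

lemma exists_analyticAt_exp_eq {f : ℂ → ℂ} {z : ℂ} (hf : AnalyticAt ℂ f z) (hfz : f z ≠ 0) :
    ∃ L : ℂ → ℂ, AnalyticAt ℂ L z ∧ ∀ᶠ w in 𝓝 z, Complex.exp (L w) = f w := by
  obtain ⟨L, hL, hexp⟩ := exists_analyticAt_exp_eq_self hfz
  exact ⟨L ∘ f, hL.comp hf, hf.continuousAt.eventually hexp⟩

lemma logDeriv_eq_deriv_of_exp_eq {f L : ℂ → ℂ} {z : ℂ} (hL : DifferentiableAt ℂ L z)
    (hexp : ∀ᶠ w in 𝓝 z, Complex.exp (L w) = f w) : logDeriv f z = deriv L z := by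
  have hf : f =ᶠ[𝓝 z] fun w => Complex.exp (L w) := hexp.mono fun _ hw => hw.symm
  rw [logDeriv_apply, hf.deriv_eq, hf.eq_of_nhds, deriv_cexp hL,
    mul_div_cancel_left₀ _ (Complex.exp_ne_zero _)]

lemma re_eq_log_norm_of_exp_eq {a b : ℂ} (h : Complex.exp a = b) : a.re = Real.log ‖b‖ := by
  rw [← h, Complex.norm_exp, Real.log_exp]

lemma eventually_logDeriv_add_mul_logDeriv_eq_zero {f g F G : ℂ → ℂ} {β c z : ℂ}
    (hF : AnalyticAt ℂ F z) (hG : AnalyticAt ℂ G z)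
    (hf : ∀ᶠ w in 𝓝 z, Complex.exp (F w) = f w) (hg : ∀ᶠ w in 𝓝 z, Complex.exp (G w) = g w)
    (hconst : ∀ᶠ w in 𝓝 z, F w + β * G w = c) :
    ∀ᶠ w in 𝓝 z, logDeriv f w + β * logDeriv g w = 0 := by
  filter_upwards [hf.eventually_nhds, hg.eventually_nhds, hF.eventually_analyticAt,
    hG.eventually_analyticAt, hconst.eventually_nhds] with w hfw hgw hFw hGw hcw
  rw [logDeriv_eq_deriv_of_exp_eq hFw.differentiableAt hfw,
    logDeriv_eq_deriv_of_exp_eq hGw.differentiableAt hgw, ← deriv_const_mul β hGw.differentiableAt,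
    ← deriv_fun_add hFw.differentiableAt (hGw.differentiableAt.const_mul β),
    EventuallyEq.deriv_eq (f := fun _ => c) hcw, deriv_const]

lemma tendstoUniformlyOn_add_mul_sub_div {G : ℂ → ℂ} {ℓ : ℕ → ℂ → ℂ} {U : Set ℂ} {B β : ℝ}
    {p : ℕ → ℤ} {κ : ℕ → ℝ} (F : ℂ → ℂ) (hG : ∀ w ∈ U, ‖G w‖ ≤ B)
    (hℓ : ∀ᶠ n in atTop, ∀ w ∈ U, ‖ℓ n w‖ ≤ B)
    (hp : Tendsto (fun n => (p n : ℝ) / n) atTop (𝓝 β))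
    (hκ : Tendsto (fun n => Real.log (κ n) / n) atTop (𝓝 0)) :
    TendstoUniformlyOn (fun n w => F w + (p n / n : ℝ) * G w - (Real.log (κ n) + ℓ n w) / n)
      (fun w => F w + β * G w) atTop U := by
  have hbound : Tendsto (fun n : ℕ => |p n / n - β| * B + (|Real.log (κ n) / n| + B / n))
      atTop (𝓝 0) := by
    simpa using ((hp.sub_const β).abs.mul_const B).add
      (hκ.abs.add (tendsto_const_div_atTop_nhds_zero_nat B))
  rw [Metric.tendstoUniformlyOn_iff]
  intro ε hε
  filter_upwards [hℓ, hbound.eventually_lt_const hε] with n hℓn hn w hw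
  refine lt_of_le_of_lt ?_ hn
  have hdiff : F w + (p n / n : ℝ) * G w - (Real.log (κ n) + ℓ n w) / n - (F w + β * G w)
      = ((p n / n - β : ℝ) : ℂ) * G w - (((Real.log (κ n) / n : ℝ) : ℂ) + ℓ n w / n) := by
    push_cast
    ring
  rw [dist_comm, dist_eq_norm, hdiff]
  refine (norm_sub_le _ _).trans (add_le_add ?_ ((norm_add_le _ _).trans (add_le_add ?_ ?_)))
  · rw [norm_mul, Complex.norm_real, Real.norm_eq_abs]
    gcongr
    exact hG w hw
  · rw [Complex.norm_real, Real.norm_eq_abs]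
  · rw [norm_div, Complex.norm_natCast]
    gcongr
    exact hℓn w hw

lemma eventually_exists_exp_nat_mul_add_int_mul_eq {F G : ℂ → ℂ} {ℓ : ℕ → ℂ → ℂ} {z : ℂ}
    {U V : Set ℂ} {B β : ℝ} {p : ℕ → ℤ} {κ : ℕ → ℝ} (hU : U ∈ 𝓝 z) (hV : V ∈ 𝓝 z)
    (hF : DifferentiableOn ℂ F U) (hG : DifferentiableOn ℂ G U) (hGB : ∀ w ∈ U, ‖G w‖ ≤ B)
    (hℓ : ∀ᶠ n in atTop, DifferentiableOn ℂ (ℓ n) U ∧ ∀ w ∈ U, ‖ℓ n w‖ ≤ B)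
    (hre : (F z + β * G z).re = 0) (hne : ∃ᶠ w in 𝓝 z, F w + β * G w ≠ F z + β * G z)
    (hp : Tendsto (fun n => (p n : ℝ) / n) atTop (𝓝 β)) (hκ_pos : ∀ᶠ n in atTop, 0 < κ n)
    (hκ : Tendsto (fun n => Real.log (κ n) / n) atTop (𝓝 0)) :
    ∀ᶠ n in atTop, ∃ w ∈ V, Complex.exp (n * F w + p n * G w) = κ n * Complex.exp (ℓ n w) := by
  have hlim := tendstoUniformlyOn_add_mul_sub_div F hGB (hℓ.mono fun _ hn => hn.2) hp hκ
  have hdiff : ∀ᶠ n : ℕ in atTop, DifferentiableOn ℂ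
      (fun w => F w + (p n / n : ℝ) * G w - (Real.log (κ n) + ℓ n w) / n) U :=
    hℓ.mono fun n hn => (hF.add (hG.const_mul _)).sub ((hn.1.const_add _).div_const _)
  filter_upwards [eventually_exists_exp_nat_mul_eq_one hU hdiff hlim hne hre hV, hκ_pos,
    eventually_ne_atTop 0] with n ⟨w, hw, hexp⟩ hκn hn
  have hsum : n * F w + p n * G w = n * (F w + (p n / n : ℝ) * G w -
      (Real.log (κ n) + ℓ n w) / n) + (Real.log (κ n) + ℓ n w) := by
    push_cast
    field_simp
    ring
  refine ⟨w, hw, ?_⟩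
  rw [hsum, Complex.exp_add, hexp, one_mul, Complex.exp_add, ← Complex.ofReal_exp,
    Real.exp_log hκn]

lemma exists_uniformly_bounded_log {u : ℕ → ℂ → ℂ} {z c : ℂ} (hc : c ≠ 0)
    (hu : Tendsto ↿u (atTop ×ˢ 𝓝 z) (𝓝 c))
    (hu_diff : ∀ᶠ q : ℕ × ℂ in atTop ×ˢ 𝓝 z, DifferentiableAt ℂ (u q.1) q.2) :
    ∃ ℓ : ℕ → ℂ → ℂ, ∃ U ∈ 𝓝 z, ∃ B : ℝ, ∀ᶠ n in atTop, DifferentiableOn ℂ (ℓ n) U ∧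
      ∀ w ∈ U, ‖ℓ n w‖ ≤ B ∧ Complex.exp (ℓ n w) = u n w := by
  obtain ⟨L, hL, hexp⟩ := exists_analyticAt_exp_eq_self hc
  have hnorm : ∀ᶠ v in 𝓝 c, ‖L v‖ < ‖L c‖ + 1 :=
    hL.continuousAt.norm.eventually_lt_const (lt_add_one _)
  obtain ⟨N, hN, U, hU, hNU⟩ := eventually_prod_iff.1
    (hu_diff.and (hu.eventually (hexp.and (hnorm.and hL.eventually_analyticAt))))
  refine ⟨fun n w => L (u n w), {w | U w}, hU, ‖L c‖ + 1, hN.mono fun n hn => ⟨?_, ?_⟩⟩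
  · intro w hw
    obtain ⟨hdiff, -, -, hLu⟩ := hNU hn hw
    exact (hLu.differentiableAt.comp w hdiff).differentiableWithinAt
  · intro w hw
    obtain ⟨-, hexp_w, hnorm_w, -⟩ := hNU hn hw
    exact ⟨hnorm_w.le, hexp_w⟩

lemma eventually_exists_pow_mul_zpow_eq {f g : ℂ → ℂ} {z c : ℂ} {β : ℝ} {p : ℕ → ℤ} {κ : ℕ → ℝ}
    {u : ℕ → ℂ → ℂ} {V : Set ℂ} (hf : AnalyticAt ℂ f z) (hg : AnalyticAt ℂ g z)
    (hfz : f z ≠ 0) (hgz : g z ≠ 0) (hre : Real.log ‖f z‖ + β * Real.log ‖g z‖ = 0)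
    (hne : ∃ᶠ w in 𝓝 z, logDeriv f w + β * logDeriv g w ≠ 0)
    (hp : Tendsto (fun n => (p n : ℝ) / n) atTop (𝓝 β)) (hκ_pos : ∀ᶠ n in atTop, 0 < κ n)
    (hκ : Tendsto (fun n => Real.log (κ n) / n) atTop (𝓝 0)) (hc : c ≠ 0)
    (hu : Tendsto ↿u (atTop ×ˢ 𝓝 z) (𝓝 c))
    (hu_diff : ∀ᶠ q : ℕ × ℂ in atTop ×ˢ 𝓝 z, DifferentiableAt ℂ (u q.1) q.2) (hV : V ∈ 𝓝 z) :
    ∀ᶠ n in atTop, ∃ w ∈ V, f w ^ n * g w ^ p n = κ n * u n w := by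
  obtain ⟨F, hF, hFexp⟩ := exists_analyticAt_exp_eq hf hfz
  obtain ⟨G, hG, hGexp⟩ := exists_analyticAt_exp_eq hg hgz
  obtain ⟨ℓ, U, hU, B, hℓ⟩ := exists_uniformly_bounded_log hc hu hu_diff
  have hGbound : ∀ᶠ w in 𝓝 z, ‖G w‖ < max (‖G z‖ + 1) B :=
    hG.continuousAt.norm.eventually_lt_const ((lt_add_one _).trans_le (le_max_left _ _))
  obtain ⟨W, hW, hWU⟩ := exists_mem_subset_iff.2
    (inter_mem hU (hGbound.and (hF.eventually_analyticAt.and hG.eventually_analyticAt)))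
  have hφ_re : (F z + β * G z).re = 0 := by
    rw [Complex.add_re, Complex.re_ofReal_mul, re_eq_log_norm_of_exp_eq hFexp.self_of_nhds,
      re_eq_log_norm_of_exp_eq hGexp.self_of_nhds, hre]
  have hφ_ne : ∃ᶠ w in 𝓝 z, F w + β * G w ≠ F z + β * G z := fun hconst => hne <| by
    simpa only [not_not] using eventually_logDeriv_add_mul_logDeriv_eq_zero hF hG hFexp hGexp
      (hconst.mono fun _ => not_not.1)
  have hℓW : ∀ᶠ n in atTop, DifferentiableOn ℂ (ℓ n) W ∧ ∀ w ∈ W, ‖ℓ n w‖ ≤ max (‖G z‖ + 1) B :=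
    hℓ.mono fun n hn => ⟨hn.1.mono fun w hw => (hWU hw).1,
      fun w hw => (hn.2 w (hWU hw).1).1.trans (le_max_right _ _)⟩
  filter_upwards [hℓ, eventually_exists_exp_nat_mul_add_int_mul_eq hW
    (inter_mem hV (inter_mem hU (hFexp.and hGexp)))
    (fun w hw => (hWU hw).2.2.1.differentiableWithinAt)
    (fun w hw => (hWU hw).2.2.2.differentiableWithinAt) (fun w hw => (hWU hw).2.1.le)
    hℓW hφ_re hφ_ne hp hκ_pos hκ] with n hℓn ⟨w, ⟨hwV, hwU, hFw, hGw⟩, hexp⟩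
  refine ⟨w, hwV, ?_⟩
  rw [← hFw, ← hGw, ← Complex.exp_nat_mul, ← Complex.exp_int_mul, ← Complex.exp_add, hexp,
    (hℓn.2 w hwU).2]

/-! ### Limits and half planes -/

lemma frequently_logDeriv_add_mul_logDeriv_id_ne_zero {Q : ℂ → ℂ} {β z : ℂ}
    (hQ : Differentiable ℂ Q) (hQ0 : Q 0 ≠ 0) (hQz : Q z ≠ 0) (hz : z ≠ 0) (hβ : β ≠ 0) :
    ∃ᶠ w in 𝓝 z, logDeriv Q w + β * logDeriv id w ≠ 0 := by
  intro hzero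
  have hlocal : (fun w => w * deriv Q w + β * Q w) =ᶠ[𝓝 z] 0 := by
    filter_upwards [hzero, eventually_ne_nhds hz, hQ.continuous.continuousAt.eventually_ne hQz]
      with w hw hw0 hQw
    rw [not_not, logDeriv_apply, logDeriv_id] at hw
    field_simp at hw
    simpa [mul_comm] using hw
  have hentire : Differentiable ℂ fun w => w * deriv Q w + β * Q w :=
    (differentiable_id.mul hQ.deriv).add (hQ.const_mul β)
  have hglobal := AnalyticOnNhd.eq_of_eventuallyEq (fun w _ => hentire.analyticAt w)
    (fun _ _ => analyticAt_const) hlocal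
  have hat_zero : 0 * deriv Q 0 + β * Q 0 = 0 := congrFun hglobal 0
  rw [zero_mul, zero_add] at hat_zero
  exact mul_ne_zero hβ hQ0 hat_zero

lemma exists_cos_add_nat_mul_pos {θ : ℝ} (hθ : 0 < θ) (hθπ : θ < Real.pi) (φ : ℝ) :
    ∃ n : ℕ, 0 < Real.cos (φ + n * θ) := by
  obtain ⟨k, hk⟩ := exists_nat_gt ((φ + Real.pi / 2) / (2 * Real.pi))
  rw [div_lt_iff₀ Real.two_pi_pos] at hk
  -- the first multiple of `θ` past the left end of an interval of length `π` on which `cos` is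
  -- positive lands inside that interval
  refine ⟨⌊(k * (2 * Real.pi) - Real.pi / 2 - φ) / θ⌋₊ + 1, ?_⟩
  have hlt := Nat.lt_floor_add_one ((k * (2 * Real.pi) - Real.pi / 2 - φ) / θ)
  have hle := Nat.floor_le (a := (k * (2 * Real.pi) - Real.pi / 2 - φ) / θ)
    (div_nonneg (by linarith) hθ.le)
  rw [div_lt_iff₀ hθ] at hlt
  rw [le_div_iff₀ hθ] at hle
  rw [← Real.cos_sub_nat_mul_two_pi _ k]
  push_cast
  exact Real.cos_pos_of_mem_Ioo ⟨by linarith, by linarith⟩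

lemma re_mul_pow_eq_norm_mul_cos (u v : ℂ) (n : ℕ) :
    (u * v ^ n).re = ‖u‖ * ‖v‖ ^ n * Real.cos (u.arg + n * v.arg) := by
  conv_lhs => rw [← Complex.norm_mul_exp_arg_mul_I u, ← Complex.norm_mul_exp_arg_mul_I v]
  rw [mul_pow, ← Complex.exp_nat_mul, mul_mul_mul_comm, ← Complex.exp_add, ← Complex.ofReal_pow,
    ← Complex.ofReal_mul, Complex.re_ofReal_mul, ← mul_assoc, ← add_mul]
  norm_cast
  rw [Complex.exp_ofReal_mul_I_re]

lemma exists_re_mul_pow_pos {u v : ℂ} (hu : u ≠ 0) (hv : v.im ≠ 0) :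
    ∃ n : ℕ, 0 < (u * v ^ n).re := by
  wlog hpos : 0 < v.im generalizing u v
  · have hconj : 0 < (starRingEnd ℂ v).im := by
      rw [Complex.conj_im]
      exact neg_pos.2 (lt_of_le_of_ne (not_lt.1 hpos) hv)
    obtain ⟨n, hn⟩ := this ((map_ne_zero (starRingEnd ℂ)).2 hu) hconj.ne' hconj
    exact ⟨n, by rwa [← map_pow, ← map_mul, Complex.conj_re] at hn⟩
  have harg : 0 < v.arg := lt_of_le_of_ne (Complex.arg_nonneg_iff.2 hpos.le)
    fun h => hpos.ne' (Complex.arg_eq_zero_iff.1 h.symm).2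
  have harg_lt : v.arg < Real.pi := Complex.arg_lt_pi_iff.2 (.inr hv)
  obtain ⟨n, hn⟩ := exists_cos_add_nat_mul_pos harg harg_lt u.arg
  have hv0 : v ≠ 0 := fun h => hv (by rw [h, Complex.zero_im])
  refine ⟨n, ?_⟩
  rw [re_mul_pow_eq_norm_mul_cos]
  positivity

lemma geom_sum_ne_zero_of_norm_ne_one {z : ℂ} {n : ℕ} (hz : ‖z‖ ≠ 1) (hn : n ≠ 0) :
    ∑ j ∈ Finset.range n, z ^ j ≠ 0 := by
  intro hsum
  have hpow : z ^ n = 1 := by rw [← sub_eq_zero, ← mul_geom_sum, hsum, mul_zero]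
  exact hz ((pow_eq_one_iff_of_nonneg (norm_nonneg z) hn).1 (by rw [← norm_pow, hpow, norm_one]))

lemma exists_nat_seq_tendsto_div {c : ℝ} (hc : 0 ≤ c) :
    ∃ s : ℕ → ℕ, Tendsto (fun n => (s n : ℝ) / n) atTop (𝓝 c) :=
  ⟨fun n => ⌊c * n⌋₊, (tendsto_nat_floor_mul_div_atTop hc).comp tendsto_natCast_atTop_atTop⟩

lemma tendsto_log_div_nat_of_tendsto_div {N : ℕ → ℝ} {c : ℝ} (hc : c ≠ 0)
    (hN : Tendsto (fun n => N n / n) atTop (𝓝 c)) :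
    Tendsto (fun n => Real.log (N n) / n) atTop (𝓝 0) := by
  have hlog : Tendsto (fun n : ℕ => Real.log n / n) atTop (𝓝 0) :=
    Real.isLittleO_log_id_atTop.tendsto_div_nhds_zero.comp tendsto_natCast_atTop_atTop
  have hsum : Tendsto (fun n : ℕ => Real.log (N n / n) / n + Real.log n / n) atTop (𝓝 0) := by
    simpa using ((hN.log hc).div_atTop tendsto_natCast_atTop_atTop).add hlog
  refine hsum.congr' ?_
  filter_upwards [hN.eventually_ne hc, eventually_ne_atTop 0] with n hn hn0
  rw [← add_div, Real.log_div (div_ne_zero_iff.1 hn).1 (Nat.cast_ne_zero.2 hn0), sub_add_cancel]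

lemma tendsto_pow_const_mul_pow_prod_nhds_zero (k : ℕ) {a : ℂ} (ha : ‖a‖ < 1) :
    Tendsto (fun q : ℕ × ℂ => (q.1 : ℂ) ^ k * q.2 ^ q.1) (atTop ×ˢ 𝓝 a) (𝓝 0) := by
  obtain ⟨r, har, hr⟩ := exists_between ha
  have hr0 : 0 ≤ r := (norm_nonneg a).trans har.le
  have hlim : Tendsto (fun q : ℕ × ℂ => (q.1 : ℝ) ^ k * r ^ q.1) (atTop ×ˢ 𝓝 a) (𝓝 0) :=
    (tendsto_pow_const_mul_const_pow_of_abs_lt_one k (by rwa [abs_of_nonneg hr0])).comp tendsto_fst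
  refine squeeze_zero_norm' ?_ hlim
  filter_upwards [tendsto_snd.eventually (continuous_norm.continuousAt.eventually_lt_const har)]
    with q hq
  rw [norm_mul, norm_pow, norm_pow, Complex.norm_natCast]
  gcongr

/-! ### Density of the roots -/

lemma differentiable_legFactor (h a : ℕ) : Differentiable ℂ (legFactor h a) := by
  unfold legFactor
  fun_prop

lemma legFactor_zero {h a : ℕ} (hh : h ≠ 0) (ha : a ≠ 0) : legFactor h a 0 = 1 := by
  simp [legFactor, hh, ha]

lemma legFactor_one_eq_pow_mul_legFactor_inv (a : ℕ) {y : ℂ} (hy : y ≠ 0) :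
    legFactor (a + 1) 1 y = y ^ (a + 1) * legFactor (a + 1) a y⁻¹ := by
  simp only [legFactor, pow_succ, inv_pow]
  field_simp
  ring

lemma exists_one_lt_norm_legFactor {z : ℂ} (hz : z.im ≠ 0) :
    ∃ a ≠ 0, 1 < ‖legFactor (a + 1) a z‖ := by
  have hz0 : z ≠ 0 := fun h => hz (by rw [h, Complex.zero_im])
  have hz1 : z ≠ 1 := fun h => hz (by rw [h, Complex.one_im])
  obtain ⟨n, hn⟩ := exists_re_mul_pow_pos (mul_ne_zero (sub_ne_zero.2 hz1) hz0) hz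
  refine ⟨n + 1, n.succ_ne_zero, lt_of_lt_of_le ?_ (Complex.re_le_norm _)⟩
  have hfactor : legFactor (n + 1 + 1) (n + 1) z = (z - 1) * z * z ^ n + 1 := by
    rw [legFactor]
    ring
  rw [hfactor, Complex.add_re, Complex.one_re]
  linarith

lemma eventually_exists_pow_mul_self_zpow_eq {Q : ℂ → ℂ} {z c : ℂ} {β : ℝ} {p : ℕ → ℤ}
    {κ : ℕ → ℝ} {u : ℕ → ℂ → ℂ} {V : Set ℂ} (hQ : Differentiable ℂ Q) (hQ0 : Q 0 ≠ 0)
    (hQz : Q z ≠ 0) (hz : z ≠ 0) (hβ : β ≠ 0) (hre : Real.log ‖Q z‖ + β * Real.log ‖z‖ = 0)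
    (hp : Tendsto (fun n => (p n : ℝ) / n) atTop (𝓝 β)) (hκ_pos : ∀ᶠ n in atTop, 0 < κ n)
    (hκ : Tendsto (fun n => Real.log (κ n) / n) atTop (𝓝 0)) (hc : c ≠ 0)
    (hu : Tendsto ↿u (atTop ×ˢ 𝓝 z) (𝓝 c))
    (hu_diff : ∀ᶠ q : ℕ × ℂ in atTop ×ˢ 𝓝 z, DifferentiableAt ℂ (u q.1) q.2) (hV : V ∈ 𝓝 z) :
    ∀ᶠ n in atTop, ∃ w ∈ V, Q w ^ n * w ^ p n = κ n * u n w :=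
  eventually_exists_pow_mul_zpow_eq (hQ.analyticAt z) analyticAt_id hQz hz hre
    (frequently_logDeriv_add_mul_logDeriv_id_ne_zero hQ hQ0 hQz hz (Complex.ofReal_ne_zero.2 hβ))
    hp hκ_pos hκ hc hu hu_diff hV

/-- The set of all `y` such that `y - 1` is a root of the connected set polynomial of a connected
graph; the substitution `x = y - 1` turns `∑ S, x ^ #S` over all subsets into a power of `y`. -/
def shiftedRoots : Set ℂ :=
  {y | ∃ (n : ℕ) (G : SimpleGraph (Fin n)), G.Connected ∧ connPoly G (y - 1) = 0}

lemma mem_shiftedRoots_of_legFactor_pow_mul_pow_eq {h a r s : ℕ} {y : ℂ} (hah : a < h)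
    (hy : legFactor h a y ^ r * y ^ (h * s) = (r + s) * -∑ j ∈ Finset.range h, y ^ j) :
    y ∈ shiftedRoots := by
  obtain ⟨n, G, hG, hpoly⟩ := exists_connected_graph 0 r s hah
  refine ⟨n, G, hG, ?_⟩
  rw [hpoly, ← pow_mul, hy, ← mul_geom_sum y h]
  ring

lemma eventually_exists_legFactor_pow_mul_pow_eq {h a : ℕ} {s : ℕ → ℕ} {γ : ℝ} {z : ℂ}
    {V : Set ℂ} (hh : h ≠ 0) (ha : a ≠ 0) (hQz : legFactor h a z ≠ 0) (hz : z ≠ 0)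
    (hz1 : ‖z‖ ≠ 1) (hγ : 0 < γ) (hs : Tendsto (fun n => (s n : ℝ) / n) atTop (𝓝 γ))
    (hre : Real.log ‖legFactor h a z‖ + h * γ * Real.log ‖z‖ = 0) (hV : V ∈ 𝓝 z) :
    ∀ᶠ n : ℕ in atTop, ∃ w ∈ V, legFactor h a w ^ n * w ^ (h * s n) =
      (n + s n) * -∑ j ∈ Finset.range h, w ^ j := by
  have hp : Tendsto (fun n => (((h * s n : ℕ) : ℤ) : ℝ) / n) atTop (𝓝 (h * γ)) := by
    refine (hs.const_mul (h : ℝ)).congr fun n => ?_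
    push_cast
    ring
  have hκ : Tendsto (fun n : ℕ => ((n + s n : ℕ) : ℝ) / n) atTop (𝓝 (1 + γ)) := by
    refine (hs.const_add 1).congr' ?_
    filter_upwards [eventually_ne_atTop 0] with n hn
    push_cast
    field_simp
  have hκ_pos : ∀ᶠ n : ℕ in atTop, (0 : ℝ) < ((n + s n : ℕ) : ℝ) := by
    filter_upwards [eventually_gt_atTop 0] with n hn
    positivity
  have hcont : Continuous fun w : ℂ => -∑ j ∈ Finset.range h, w ^ j := by fun_prop
  filter_upwards [eventually_exists_pow_mul_self_zpow_eq
    (u := fun _ w => -∑ j ∈ Finset.range h, w ^ j) (differentiable_legFactor h a)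
    (by rw [legFactor_zero hh ha]; exact one_ne_zero) hQz hz (by positivity) hre hp hκ_pos
    (tendsto_log_div_nat_of_tendsto_div (by positivity) hκ)
    (neg_ne_zero.2 (geom_sum_ne_zero_of_norm_ne_one hz1 hh))
    (hcont.continuousAt.tendsto.comp tendsto_snd)
    (.of_forall fun q => by fun_prop) hV] with n ⟨w, hwV, hw⟩
  exact ⟨w, hwV, by exact_mod_cast hw⟩

lemma mem_closure_shiftedRoots_of_norm_lt_one {z : ℂ} (hz : z.im ≠ 0) (hz1 : ‖z‖ < 1) :
    z ∈ closure shiftedRoots := by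
  have hz0 : z ≠ 0 := fun h => hz (by rw [h, Complex.zero_im])
  have hlog_z : Real.log ‖z‖ < 0 := Real.log_neg (norm_pos_iff.2 hz0) hz1
  obtain ⟨a, ha, hQ⟩ := exists_one_lt_norm_legFactor hz
  have hlog_Q : 0 < Real.log ‖legFactor (a + 1) a z‖ := Real.log_pos hQ
  obtain ⟨γ, hγ, hre⟩ : ∃ γ > 0, Real.log ‖legFactor (a + 1) a z‖ +
      ((a + 1 : ℕ) : ℝ) * γ * Real.log ‖z‖ = 0 := by
    refine ⟨Real.log ‖legFactor (a + 1) a z‖ / (((a + 1 : ℕ) : ℝ) * -Real.log ‖z‖),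
      div_pos hlog_Q (mul_pos (by positivity) (neg_pos.2 hlog_z)), ?_⟩
    field_simp [hlog_z.ne]
    ring
  obtain ⟨s, hs⟩ := exists_nat_seq_tendsto_div hγ.le
  refine mem_closure_iff_nhds.2 fun V hV => ?_
  obtain ⟨n, w, hwV, hw⟩ := (eventually_exists_legFactor_pow_mul_pow_eq a.succ_ne_zero ha
    (norm_pos_iff.1 (one_pos.trans hQ)) hz0 hz1.ne hγ hs hre hV).exists
  exact ⟨w, hwV, mem_shiftedRoots_of_legFactor_pow_mul_pow_eq a.lt_succ_self hw⟩

/-- What is left of the equation `connPoly G (y - 1) = 0` for the graphs `G` of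
`exists_connected_graph m n 0` after isolating `legFactor h a y ^ n` and dividing by
`y ^ (h * n + m)`; for `1 < ‖y‖` it converges to `-(y / (y - 1))` as `n` and `m` grow. -/
noncomputable def normalizedRemainder (h n m : ℕ) (y : ℂ) : ℂ :=
  -(y / (y - 1)) * (1 - y⁻¹ ^ m) - n * y⁻¹ ^ (h * n + m) * ∑ j ∈ Finset.range h, y ^ j

lemma mem_shiftedRoots_of_legFactor_pow_eq {h a m n : ℕ} {y : ℂ} (hah : a < h) (hy0 : y ≠ 0)
    (hy1 : y ≠ 1)
    (hy : legFactor h a y ^ n * y ^ (-((h * n + m : ℕ) : ℤ)) = normalizedRemainder h n m y) :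
    y ∈ shiftedRoots := by
  have hy1' : y - 1 ≠ 0 := sub_ne_zero.2 hy1
  obtain ⟨N, G, hG, hpoly⟩ := exists_connected_graph m n 0 hah
  refine ⟨N, G, hG, ?_⟩
  have hpow : legFactor h a y ^ n = y ^ (h * n + m) * normalizedRemainder h n m y := by
    rw [← hy, zpow_neg, zpow_natCast]
    field_simp
  rw [hpoly, hpow, normalizedRemainder, ← mul_geom_sum y h]
  simp only [inv_pow]
  field_simp
  ring

lemma differentiableAt_normalizedRemainder (h n m : ℕ) {y : ℂ} (hy0 : y ≠ 0) (hy1 : y ≠ 1) :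
    DifferentiableAt ℂ (normalizedRemainder h n m) y := by
  have hy1' : y - 1 ≠ 0 := sub_ne_zero.2 hy1
  unfold normalizedRemainder
  fun_prop (disch := assumption)

lemma tendsto_normalizedRemainder {h : ℕ} {m : ℕ → ℕ} {z : ℂ} (hh : h ≠ 0)
    (hm : Tendsto m atTop atTop) (hz : 1 < ‖z‖) :
    Tendsto (fun q : ℕ × ℂ => normalizedRemainder h q.1 (m q.1) q.2) (atTop ×ˢ 𝓝 z)
      (𝓝 (-(z / (z - 1)))) := by
  obtain ⟨a, rfl⟩ := Nat.exists_eq_succ_of_ne_zero hh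
  have hz0 : z ≠ 0 := norm_pos_iff.1 (one_pos.trans hz)
  have hz1 : z - 1 ≠ 0 := sub_ne_zero.2 fun h => hz.ne' (h ▸ norm_one)
  have hinv : ‖z⁻¹‖ < 1 := norm_inv z ▸ inv_lt_one_of_one_lt₀ hz
  have hsnd : Tendsto (fun q : ℕ × ℂ => q.2) (atTop ×ˢ 𝓝 z) (𝓝 z) := tendsto_snd
  have hpow (e : ℕ → ℕ) (he : Tendsto e atTop atTop) :
      Tendsto (fun q : ℕ × ℂ => q.2⁻¹ ^ e q.1) (atTop ×ˢ 𝓝 z) (𝓝 0) :=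
    ((tendsto_pow_const_mul_pow_prod_nhds_zero 0 hinv).comp
      (he.prodMap (tendsto_inv₀ hz0))).congr fun q => by
        simp only [Function.comp_apply, Prod.map_fst, Prod.map_snd, pow_zero, one_mul]
  have hlin : Tendsto (fun q : ℕ × ℂ => (q.1 : ℂ) * q.2⁻¹ ^ q.1) (atTop ×ˢ 𝓝 z) (𝓝 0) :=
    ((tendsto_pow_const_mul_pow_prod_nhds_zero 1 hinv).comp
      (tendsto_id.prodMap (tendsto_inv₀ hz0))).congr fun q => by
        simp only [Function.comp_apply, Prod.map_fst, Prod.map_snd, id, pow_one]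
  have hsum : Tendsto (fun q : ℕ × ℂ => ∑ j ∈ Finset.range (a + 1), q.2 ^ j) (atTop ×ˢ 𝓝 z)
      (𝓝 (∑ j ∈ Finset.range (a + 1), z ^ j)) := tendsto_finsetSum _ fun j _ => hsnd.pow j
  have hexp : Tendsto (fun n => a * n + m n) atTop atTop :=
    tendsto_atTop_mono (fun n => Nat.le_add_left _ _) hm
  have hlim := ((hsnd.div (hsnd.sub_const 1) hz1).neg.mul ((hpow m hm).const_sub 1)).sub
    ((hlin.mul (hpow _ hexp)).mul hsum)
  simp only [sub_zero, mul_one, zero_mul] at hlim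
  refine hlim.congr fun q => ?_
  simp only [normalizedRemainder, Pi.div_apply, Nat.succ_eq_add_one]
  ring

lemma eventually_exists_legFactor_pow_mul_zpow_eq {h a : ℕ} {m : ℕ → ℕ} {γ : ℝ} {z : ℂ}
    {V : Set ℂ} (hh : h ≠ 0) (ha : a ≠ 0) (hQz : legFactor h a z ≠ 0) (hz : 1 < ‖z‖)
    (hγ : 0 < γ) (hm : Tendsto (fun n => (m n : ℝ) / n) atTop (𝓝 γ))
    (hre : Real.log ‖legFactor h a z‖ = (h + γ) * Real.log ‖z‖) (hV : V ∈ 𝓝 z) :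
    ∀ᶠ n : ℕ in atTop, ∃ w ∈ V, legFactor h a w ^ n * w ^ (-((h * n + m n : ℕ) : ℤ)) =
      normalizedRemainder h n (m n) w := by
  have hz0 : z ≠ 0 := norm_pos_iff.1 (one_pos.trans hz)
  have hz1 : z ≠ 1 := fun h => hz.ne' (h ▸ norm_one)
  have hm_top : Tendsto m atTop atTop := by
    have hmul := hm.pos_mul_atTop hγ tendsto_natCast_atTop_atTop
    refine tendsto_natCast_atTop_iff.1 (hmul.congr' ?_)
    filter_upwards [eventually_ne_atTop 0] with n hn
    exact div_mul_cancel₀ _ (Nat.cast_ne_zero.2 hn)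
  have hp : Tendsto (fun n => ((-((h * n + m n : ℕ) : ℤ) : ℤ) : ℝ) / n) atTop
      (𝓝 (-(h + γ))) := by
    refine (hm.const_add (h : ℝ)).neg.congr' ?_
    filter_upwards [eventually_ne_atTop 0] with n hn
    push_cast
    field_simp
  have hdiff : ∀ᶠ q : ℕ × ℂ in atTop ×ˢ 𝓝 z,
      DifferentiableAt ℂ (normalizedRemainder h q.1 (m q.1)) q.2 := by
    filter_upwards [tendsto_snd.eventually ((eventually_ne_nhds hz0).and (eventually_ne_nhds hz1))]
      with q ⟨hq0, hq1⟩ using differentiableAt_normalizedRemainder _ _ _ hq0 hq1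
  filter_upwards [eventually_exists_pow_mul_self_zpow_eq (κ := fun _ => 1)
    (u := fun n => normalizedRemainder h n (m n)) (differentiable_legFactor h a)
    (by rw [legFactor_zero hh ha]; exact one_ne_zero) hQz hz0 (neg_ne_zero.2 (by positivity))
    (by rw [hre]; ring) hp (.of_forall fun _ => one_pos)
    (by simp only [Real.log_one, zero_div, tendsto_const_nhds])
    (neg_ne_zero.2 (div_ne_zero hz0 (sub_ne_zero.2 hz1)))
    (tendsto_normalizedRemainder hh hm_top hz) hdiff hV] with n ⟨w, hwV, hw⟩
  exact ⟨w, hwV, by simpa only [Complex.ofReal_one, one_mul] using hw⟩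

lemma mem_closure_shiftedRoots_of_one_lt_norm {z : ℂ} (hz : z.im ≠ 0) (hz1 : 1 < ‖z‖) :
    z ∈ closure shiftedRoots := by
  have hz0 : z ≠ 0 := norm_pos_iff.1 (one_pos.trans hz1)
  have hz_ne_one : z ≠ 1 := fun h => hz1.ne' (h ▸ norm_one)
  have hlog_z : 0 < Real.log ‖z‖ := Real.log_pos hz1
  have hinv_im : z⁻¹.im ≠ 0 := by
    rw [Complex.inv_im]
    exact div_ne_zero (neg_ne_zero.2 hz) (Complex.normSq_pos.2 hz0).ne'
  obtain ⟨a, ha, hQ_inv⟩ := exists_one_lt_norm_legFactor hinv_im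
  have hQ : Real.log ‖legFactor (a + 1) 1 z‖ =
      (a + 1 : ℕ) * Real.log ‖z‖ + Real.log ‖legFactor (a + 1) a z⁻¹‖ := by
    rw [legFactor_one_eq_pow_mul_legFactor_inv a hz0, norm_mul, norm_pow,
      Real.log_mul (by positivity) (one_pos.trans hQ_inv).ne', Real.log_pow]
  have hQ_ne : legFactor (a + 1) 1 z ≠ 0 := by
    rw [legFactor_one_eq_pow_mul_legFactor_inv a hz0]
    exact mul_ne_zero (pow_ne_zero _ hz0) (norm_pos_iff.1 (one_pos.trans hQ_inv))
  have hγ : 0 < Real.log ‖legFactor (a + 1) a z⁻¹‖ / Real.log ‖z‖ :=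
    div_pos (Real.log_pos hQ_inv) hlog_z
  obtain ⟨m, hm⟩ := exists_nat_seq_tendsto_div hγ.le
  have hre : Real.log ‖legFactor (a + 1) 1 z‖ = ((a + 1 : ℕ) +
      Real.log ‖legFactor (a + 1) a z⁻¹‖ / Real.log ‖z‖) * Real.log ‖z‖ := by
    rw [hQ, add_mul, div_mul_cancel₀ _ hlog_z.ne']
  refine mem_closure_iff_nhds.2 fun V hV => ?_
  obtain ⟨n, w, ⟨hwV, hw0, hw1⟩, hw⟩ := (eventually_exists_legFactor_pow_mul_zpow_eq
    a.succ_ne_zero one_ne_zero hQ_ne hz1 hγ hm hre (inter_mem hV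
      ((eventually_ne_nhds hz0).and (eventually_ne_nhds hz_ne_one)))).exists
  exact ⟨w, hwV, mem_shiftedRoots_of_legFactor_pow_eq
    (Nat.succ_lt_succ (Nat.pos_of_ne_zero ha)) hw0 hw1 hw⟩

lemma dense_im_ne_zero_inter_norm_ne_one : Dense ({z : ℂ | z.im ≠ 0} ∩ {z : ℂ | ‖z‖ ≠ 1}) := by
  have him : Dense {z : ℂ | z.im ≠ 0} :=
    (dense_compl_singleton (0 : ℝ)).preimage Complex.isOpenMap_im
  have hsphere : Dense (sphere (0 : ℂ) 1)ᶜ :=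
    interior_eq_empty_iff_dense_compl.1 (interior_sphere _ one_ne_zero)
  have hcompl : {z : ℂ | ‖z‖ ≠ 1} = (sphere (0 : ℂ) 1)ᶜ := by
    ext z
    simp only [Set.mem_ofPred_eq, Set.mem_compl_iff, mem_sphere_zero_iff_norm, ne_eq]
  rw [hcompl]
  exact him.inter_of_isOpen_right hsphere isClosed_sphere.isOpen_compl

lemma dense_shiftedRoots : Dense shiftedRoots := by
  refine dense_closure.1 (dense_im_ne_zero_inter_norm_ne_one.mono ?_)
  rintro z ⟨him, hnorm⟩
  rcases lt_or_gt_of_ne hnorm with hlt | hgt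
  · exact mem_closure_shiftedRoots_of_norm_lt_one him hlt
  · exact mem_closure_shiftedRoots_of_one_lt_norm him hgt

/-- The roots of connected set polynomials of connected finite simple graphs are dense in
the complex plane. -/
theorem connPoly_roots_dense :
    ∀ (z : ℂ) (ε : ℝ), 0 < ε →
      ∃ (n : ℕ) (G : SimpleGraph (Fin n)), G.Connected ∧
        ∃ w : ℂ, ‖w - z‖ < ε ∧ connPoly G w = 0 := by
  intro z ε hε
  obtain ⟨y, ⟨n, G, hG, hroot⟩, hdist⟩ := dense_shiftedRoots.exists_dist_lt (z + 1) hε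
  refine ⟨n, G, hG, y - 1, ?_, hroot⟩
  rwa [dist_comm, dist_eq_norm, add_comm, ← sub_sub] at hdist
end

section
/- Let G be a finite simple graph on n_G vertices and H a finite simple graph on n_H vertices, and let G·H denote their lexicographic product. Then the connected set polynomials satisfy C(G·H; x) = C(G; (x+1)^{n_H} − 1) + n_G·[ C(H; x) − (x+1)^{n_H} + 1 ] as polynomials (equivalently, for all complex x). -/
open scoped Classical

/-- The lexicographic product of two simple graphs: `(u,x)` and `(v,y)` are adjacent iff
`u ~ v` in `G`, or `u = v` and `x ~ y` in `H`. -/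
def lexProd {α β : Type*} (G : SimpleGraph α) (H : SimpleGraph β) :
    SimpleGraph (α × β) where
  Adj p q := G.Adj p.1 q.1 ∨ (p.1 = q.1 ∧ H.Adj p.2 q.2)
  symm := by
    refine ⟨?_⟩
    rintro p q (h | ⟨h1, h2⟩)
    · exact Or.inl h.symm
    · exact Or.inr ⟨h1.symm, h2.symm⟩
  loopless := by
    refine ⟨?_⟩
    rintro p (h | ⟨-, h⟩)
    · exact G.loopless.irrefl _ h
    · exact H.loopless.irrefl _ h

/-!
Split the connected sets of `lexProd G H` by their projection to `G`. A set whose projection `T`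
has at least two vertices is connected exactly when `T` is: vertices in a common fibre are joined
through a neighbouring fibre, whatever `H` is. Such a set meets each fibre over `T` in an arbitrary
nonempty set, so these sets contribute to `C(G)` with `x` replaced by `(x + 1) ^ n_H - 1`. A
connected set within a single fibre is a copy of a connected set of `H`; so each vertex of `G`
contributes `C(H)`, in place of its term `(x + 1) ^ n_H - 1` in the substituted `C(G)`. Nothing
changes if each vertex carries its own variable.
-/

section Connectivity

variable {V W : Type*} {G : SimpleGraph V} {G' : SimpleGraph W}

theorem reachable_of_forall_adj_reachable (f : V → W)
    (hf : ∀ u v, G.Adj u v → G'.Reachable (f u) (f v)) {u v : V} (huv : G.Reachable u v) :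
    G'.Reachable (f u) (f v) := by
  simp only [SimpleGraph.reachable_iff_reflTransGen] at hf huv ⊢
  exact huv.lift' f hf

theorem connected_induce_singleton (G : SimpleGraph V) (v : V) : (G.induce {v}).Connected :=
  ⟨.of_subsingleton⟩

theorem connected_induce_image_embedding_iff (φ : G ↪g G') (s : Set V) :
    (G'.induce (φ '' s)).Connected ↔ (G.induce s).Connected :=
  let e : G.induce s ≃g G'.induce (φ '' s) :=
    { toEquiv := Equiv.Set.image φ s φ.injective, map_rel_iff' := φ.map_adj_iff }
  e.connected_iff.symm

end Connectivity

section LexProdConnectivity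

variable {α β : Type*} {G : SimpleGraph α} {H : SimpleGraph β} {S : Set (α × β)}

/-- The copy of `H` in `lexProd G H` formed by the fibre over the vertex `a` of `G`. -/
def lexProdFiberEmbedding (G : SimpleGraph α) (H : SimpleGraph β) (a : α) : H ↪g lexProd G H where
  toFun := Prod.mk a
  inj' := Prod.mk_right_injective a
  map_rel_iff' := by simp [lexProd]

theorem connected_induce_image_fst (hS : ((lexProd G H).induce S).Connected) :
    (G.induce (Prod.fst '' S)).Connected := by
  let π : S → Prod.fst '' S := fun p => ⟨p.1.1, Set.mem_image_of_mem _ p.2⟩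
  have hπ : ∀ p q, ((lexProd G H).induce S).Adj p q →
      (G.induce (Prod.fst '' S)).Reachable (π p) (π q) := by
    rintro p q (hadj | ⟨heq, -⟩)
    · exact SimpleGraph.Adj.reachable hadj
    · rw [show π p = π q from Subtype.ext heq]
  have : Nonempty (Prod.fst '' S) := hS.nonempty.map π
  refine ⟨?_⟩
  rintro ⟨_, p, hp, rfl⟩ ⟨_, q, hq, rfl⟩
  exact reachable_of_forall_adj_reachable π hπ (hS.preconnected ⟨p, hp⟩ ⟨q, hq⟩)

theorem reachable_induce_lexProd_of_fst_eq (hS : (Prod.fst '' S).Nontrivial)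
    (hG : (G.induce (Prod.fst '' S)).Preconnected) {p q : S} (hpq : p.1.1 = q.1.1) :
    ((lexProd G H).induce S).Reachable p q := by
  have := hS.coe_sort
  obtain ⟨⟨_, r, hr, rfl⟩, hadj⟩ :=
    hG.exists_adj_of_nontrivial ⟨p.1.1, Set.mem_image_of_mem _ p.2⟩
  have hpr : G.Adj p.1.1 r.1 := hadj
  have hp : ((lexProd G H).induce S).Adj p ⟨r, hr⟩ := Or.inl hpr
  have hq : ((lexProd G H).induce S).Adj q ⟨r, hr⟩ := Or.inl (hpq ▸ hpr)
  exact hp.reachable.trans hq.symm.reachable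

theorem connected_induce_lexProd_iff (hS : (Prod.fst '' S).Nontrivial) :
    ((lexProd G H).induce S).Connected ↔ (G.induce (Prod.fst '' S)).Connected := by
  refine ⟨connected_induce_image_fst, fun hG => ?_⟩
  choose σ hσS hσ using fun a : Prod.fst '' S => a.2
  let s : G.induce (Prod.fst '' S) →g (lexProd G H).induce S :=
    { toFun := fun a => ⟨σ a, hσS a⟩
      map_rel' := fun {a b} hab => Or.inl (by simpa [hσ] using hab) }
  have reachable_section (p : S) :
      ((lexProd G H).induce S).Reachable p (s ⟨p.1.1, Set.mem_image_of_mem _ p.2⟩) :=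
    reachable_induce_lexProd_of_fst_eq hS hG.preconnected (hσ ⟨p.1.1, _⟩).symm
  have : Nonempty S := hG.nonempty.map s
  exact ⟨fun p q => (reachable_section p).trans <|
    ((hG.preconnected _ _).map s).trans (reachable_section q).symm⟩

end LexProdConnectivity

section SumsOverFinsets

variable {ι κ M R : Type*}

theorem sum_finset_eq_sum_singleton_add_sum_nontrivial [Fintype ι] [AddCommMonoid M]
    (F : Finset ι → M) (hF : F ∅ = 0) :
    ∑ T, F T = ∑ i, F {i} + ∑ T with T.Nontrivial, F T := by
  have hsingle : ∑ i, F {i} = ∑ T with ¬ T.Nontrivial, F T := by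
    refine Finset.sum_of_injOn (fun i => {i}) Finset.singleton_injective.injOn
      (by simp [Set.MapsTo]) (fun T hT hT' => ?_) (fun _ _ => rfl)
    obtain rfl | hne := T.eq_empty_or_nonempty
    · exact hF
    · obtain ⟨i, rfl⟩ | hnontrivial := hne.exists_eq_singleton_or_nontrivial
      · simp at hT'
      · exact absurd hnontrivial (Finset.mem_filter.mp hT).2
  rw [hsingle, add_comm, Finset.sum_filter_add_sum_filter_not]

theorem eq_of_forall_sum_powerset_eq [AddCancelCommMonoid M] {f g : Finset ι → M}
    (h : ∀ T : Finset ι, ∑ U ∈ T.powerset, f U = ∑ U ∈ T.powerset, g U) (T : Finset ι) :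
    f T = g T := by
  induction T using Finset.strongInduction with
  | H T ih =>
    have hproper : ∑ U ∈ T.ssubsets, f U = ∑ U ∈ T.ssubsets, g U :=
      Finset.sum_congr rfl fun U hU => ih U (Finset.mem_ssubsets.mp hU)
    have hT := h T
    rw [← Finset.insert_erase (Finset.mem_powerset_self T),
      Finset.sum_insert (Finset.notMem_erase _ _),
      Finset.sum_insert (Finset.notMem_erase _ _)] at hT
    exact add_right_cancel (hproper ▸ hT)

-- Möbius inversion: summed over subsets of `T`, both sides become `∏ i with f i ∈ T, (w i + 1)`.
theorem sum_prod_filter_image_eq [Fintype ι] [CommRing R] (f : ι → κ) (w : ι → R) (T : Finset κ) :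
    ∑ S with S.image f = T, ∏ i ∈ S, w i =
      ∏ k ∈ T, (∏ i with f i = k, (w i + 1) - 1) := by
  refine eq_of_forall_sum_powerset_eq
    (f := fun T => ∑ S with S.image f = T, ∏ i ∈ S, w i)
    (g := fun T => ∏ k ∈ T, (∏ i with f i = k, (w i + 1) - 1)) (fun T => ?_) T
  have hpowerset : ({S | S.image f ∈ T.powerset} : Finset (Finset ι)) =
      ({i | f i ∈ T} : Finset ι).powerset := by
    ext S
    simp [Finset.subset_iff]
  calc ∑ U ∈ T.powerset, ∑ S with S.image f = U, ∏ i ∈ S, w i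
      = ∑ S ∈ ({i | f i ∈ T} : Finset ι).powerset, ∏ i ∈ S, w i := by
        rw [Finset.sum_fiberwise_eq_sum_filter, hpowerset]
    _ = ∏ i with f i ∈ T, (w i + 1) := (Finset.prod_add_one _).symm
    _ = ∏ k ∈ T, ∏ i with f i = k, (w i + 1) := (Finset.prod_fiberwise_eq_prod_filter _ _ _ _).symm
    _ = ∑ U ∈ T.powerset, ∏ k ∈ U, (∏ i with f i = k, (w i + 1) - 1) := by
        rw [← Finset.prod_add_one]
        simp only [sub_add_cancel]

theorem prod_filter_fst_eq [Fintype ι] [Fintype κ] [CommMonoid M] (f : ι × κ → M) (i : ι) :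
    ∏ p with p.1 = i, f p = ∏ k, f (i, k) := by
  rw [Finset.prod_filter, Fintype.prod_prod_type, Finset.prod_eq_single i] <;> simp +contextual

end SumsOverFinsets

section ConnectedSets

variable {V W R : Type*} [Fintype V] [Fintype W]

/-- The connected sets of `G`; they are nonempty since `SimpleGraph.Connected` includes
`Nonempty`. -/
noncomputable def connSets (G : SimpleGraph V) : Finset (Finset V) :=
  {S | (G.induce (S : Set V)).Connected}

/-- The multivariate connected set polynomial of `G`, with one variable for each vertex, evaluated
at `w`. A constant `w` recovers `connPoly G`. -/
noncomputable def connSum [CommSemiring R] (G : SimpleGraph V) (w : V → R) : R :=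
  ∑ S ∈ connSets G, ∏ v ∈ S, w v

variable {G : SimpleGraph V} {G' : SimpleGraph W} {S : Finset V}

theorem mem_connSets : S ∈ connSets G ↔ (G.induce (S : Set V)).Connected := by
  simp [connSets]

theorem nonempty_of_mem_connSets (hS : S ∈ connSets G) : S.Nonempty :=
  Set.nonempty_coe_sort.mp (mem_connSets.mp hS).nonempty

theorem connPoly_eq_connSum (G : SimpleGraph V) (x : ℂ) : connPoly G x = connSum G fun _ => x := by
  have hcard : ∀ S ∈ connSets G, S.card ∈ Finset.Icc 1 (Fintype.card V) := fun S hS =>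
    Finset.mem_Icc.mpr ⟨(nonempty_of_mem_connSets hS).card_pos, S.card_le_univ⟩
  have hcount (k : ℕ) : connCount G k = ((connSets G).filter (·.card = k)).card := by
    simp only [connCount, connSets, Finset.filter_filter, and_comm]
  simp only [connPoly, connSum, hcount, Finset.prod_const]
  rw [← Finset.sum_fiberwise_of_maps_to' hcard]
  simp only [Finset.sum_const, nsmul_eq_mul]

theorem connSum_eq_sum_add_sum_nontrivial [CommSemiring R] (G : SimpleGraph V) (w : V → R) :
    connSum G w =
      ∑ v, w v + ∑ T with T.Nontrivial, if T ∈ connSets G then ∏ v ∈ T, w v else 0 := by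
  have hempty : ∅ ∉ connSets G := fun h => (nonempty_of_mem_connSets h).ne_empty rfl
  have hsingleton (v : V) : {v} ∈ connSets G := by
    rw [mem_connSets, Finset.coe_singleton]
    exact connected_induce_singleton G v
  have hsplit := sum_finset_eq_sum_singleton_add_sum_nontrivial
    (fun T => if T ∈ connSets G then ∏ v ∈ T, w v else 0) (if_neg hempty)
  simpa [connSum, hsingleton] using hsplit

theorem connSum_comp_embedding [CommSemiring R] (φ : G ↪g G') (w : W → R) :
    connSum G (w ∘ φ) =
      ∑ S ∈ (connSets G').filter (fun S : Finset W => (S : Set W) ⊆ Set.range φ), ∏ v ∈ S, w v := by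
  have hmem (T : Finset V) : T.image φ ∈ connSets G' ↔ T ∈ connSets G := by
    rw [mem_connSets, mem_connSets, Finset.coe_image]
    exact connected_induce_image_embedding_iff φ T
  have hfilter : (connSets G').filter (fun S : Finset W => (S : Set W) ⊆ Set.range φ) =
      (connSets G).image (Finset.image φ) := by
    ext S
    refine Finset.mem_filter.trans ⟨fun ⟨hS, hrange⟩ => ?_, fun hS => ?_⟩
    · obtain ⟨T, -, rfl⟩ :=
        Finset.subset_set_image_iff.mp (hrange.trans_eq Set.image_univ.symm)
      exact Finset.mem_image_of_mem _ ((hmem T).mp hS)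
    · obtain ⟨T, hT, rfl⟩ := Finset.mem_image.mp hS
      exact ⟨(hmem T).mpr hT, by simp⟩
  rw [hfilter, Finset.sum_image (Finset.image_injective φ.injective).injOn]
  simp only [connSum, Finset.prod_image φ.injective.injOn, Function.comp_apply]

end ConnectedSets

section LexProd

variable {α β R : Type*} [Fintype α] [Fintype β] (G : SimpleGraph α) (H : SimpleGraph β)

theorem sum_connSets_lexProd_image_fst_eq_singleton [CommSemiring R] (w : α × β → R) (a : α) :
    ∑ S ∈ connSets (lexProd G H) with S.image Prod.fst = {a}, ∏ p ∈ S, w p =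
      connSum H fun b => w (a, b) := by
  have hrange (S : Finset (α × β)) (hS : S ∈ connSets (lexProd G H)) :
      S.image Prod.fst = {a} ↔ (S : Set (α × β)) ⊆ Set.range (lexProdFiberEmbedding G H a) := by
    rw [← ((nonempty_of_mem_connSets hS).image _).subset_singleton_iff, Finset.image_subset_iff]
    simp [Set.subset_def, lexProdFiberEmbedding, eq_comm]
  rw [Finset.filter_congr hrange, ← connSum_comp_embedding]
  rfl

theorem sum_connSets_lexProd_image_fst_eq_of_nontrivial [CommRing R] (w : α × β → R)
    {T : Finset α} (hT : T.Nontrivial) :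
    ∑ S ∈ connSets (lexProd G H) with S.image Prod.fst = T, ∏ p ∈ S, w p =
      if T ∈ connSets G then ∏ a ∈ T, (∏ b, (w (a, b) + 1) - 1) else 0 := by
  have hconn (S : Finset (α × β)) (hS : S.image Prod.fst = T) :
      S ∈ connSets (lexProd G H) ↔ T ∈ connSets G := by
    subst hS
    rw [mem_connSets, mem_connSets, Finset.coe_image]
    exact connected_induce_lexProd_iff (by simpa [← Finset.coe_image] using hT)
  split_ifs with hTG
  · simp only [← prod_filter_fst_eq (fun p => w p + 1), ← sum_prod_filter_image_eq]
    refine Finset.sum_congr ?_ fun _ _ => rfl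
    ext S
    simp +contextual [hconn, hTG]
  · refine Finset.sum_eq_zero fun S hS => ?_
    obtain ⟨hSL, hST⟩ := Finset.mem_filter.mp hS
    exact absurd ((hconn S hST).mp hSL) hTG

theorem connPoly_lexProd_general [CommRing R] (w : α × β → R) :
    connSum (lexProd G H) w =
      connSum G (fun a => ∏ b, (w (a, b) + 1) - 1) +
        ∑ a, (connSum H (fun b => w (a, b)) - ∏ b, (w (a, b) + 1) + 1) := by
  let y : α → R := fun a => ∏ b, (w (a, b) + 1) - 1
  let F : Finset α → R := fun T =>
    ∑ S ∈ connSets (lexProd G H) with S.image Prod.fst = T, ∏ p ∈ S, w p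
  have hempty : F ∅ = 0 := by
    refine Finset.sum_eq_zero fun S hS => ?_
    obtain ⟨hSL, hS₀⟩ := Finset.mem_filter.mp hS
    exact absurd (Finset.image_eq_empty.mp hS₀) (nonempty_of_mem_connSets hSL).ne_empty
  calc connSum (lexProd G H) w
      = ∑ T, F T := (Finset.sum_fiberwise _ _ _).symm
    _ = ∑ a, F {a} + ∑ T with T.Nontrivial, F T :=
        sum_finset_eq_sum_singleton_add_sum_nontrivial F hempty
    _ = ∑ a, connSum H (fun b => w (a, b)) +
          ∑ T with T.Nontrivial, if T ∈ connSets G then ∏ a ∈ T, y a else 0 :=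
        congrArg₂ _
          (Finset.sum_congr rfl fun a _ => sum_connSets_lexProd_image_fst_eq_singleton G H w a)
          (Finset.sum_congr rfl fun T hT => sum_connSets_lexProd_image_fst_eq_of_nontrivial G H w
            (Finset.mem_filter.mp hT).2)
    _ = connSum G y + ∑ a, (connSum H (fun b => w (a, b)) - ∏ b, (w (a, b) + 1) + 1) := by
        simp only [connSum_eq_sum_add_sum_nontrivial G y, y, Finset.sum_add_distrib,
          Finset.sum_sub_distrib]
        abel

end LexProd

/-- The connected set polynomial of a lexicographic product:
`C(G*H;x) = C(G;(x+1)^(n_H)-1) + n_G * (C(H;x) - (x+1)^(n_H) + 1)`. -/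
theorem connPoly_lexProd {α β : Type*} [Fintype α] [Fintype β]
    (G : SimpleGraph α) (H : SimpleGraph β) (x : ℂ) :
    connPoly (lexProd G H) x =
      connPoly G ((x + 1) ^ (Fintype.card β) - 1) +
        (Fintype.card α : ℂ) *
          (connPoly H x - (x + 1) ^ (Fintype.card β) + 1) := by
  simpa [connPoly_eq_connSum, mul_add] using connPoly_lexProd_general G H fun _ => x
end
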